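/- arXiv:1001.1783 — 5 statements merged into one kernel-verified Lean document; each statement's English description precedes it below -/
import Mathlib

section
/- Let p be a prime, let α ≥ 1, and let n ≥ 0 with standard base-p digits n_l n_{l−1} ⋯ n_0. Then the number of nonzero entries on row n of Pascal's triangle modulo p^α satisfies a_{p^α}(n) = (∏_{i=0}^{l} (n_i + 1)) · Σ_{γ=0}^{2(α−1)} Σ_{P ∈ S_α(γ)} Σ_{P: nonoverlapping subwords of n} c(v)c(w)⋯c(z), the equality read in the rational numbers. -/
/-- The number of integers `0 ≤ m ≤ n` such that `C(n,m)` is not divisible by `k`,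
i.e. the number of nonzero entries on row `n` of Pascal's triangle modulo `k`. -/
def rowCount (k n : ℕ) : ℕ :=
  ((Finset.range (n + 1)).filter fun m => ¬ k ∣ n.choose m).card

/-- The number of borrows when subtracting `m` from `n` in base `b` (for `m ≤ n`):
the number of indices `i ≥ 0` with `m mod b^(i+1) > n mod b^(i+1)`. -/
def borrowCount (b n m : ℕ) : ℕ :=
  ((Finset.range (Nat.digits b n).length).filter fun i => n % b ^ (i + 1) < m % b ^ (i + 1)).card

/-- `A_n(β)`: the number of `0 ≤ m ≤ n` with exactly `β` borrows
when subtracting `m` from `n` in base `b`. -/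
def borrowA (b n β : ℕ) : ℕ :=
  ((Finset.range (n + 1)).filter fun m => borrowCount b n m = β).card

/-- `B_n(β)` with respect to `L` digit positions: the number of `n < m ≤ b^L - 1` such that
exactly `β` of the indices `0 ≤ i ≤ L - 1` satisfy `m mod b^(i+1) > n mod b^(i+1)`. -/
def borrowB (b L n β : ℕ) : ℕ :=
  ((Finset.Ioc n (b ^ L - 1)).filter fun m =>
    ((Finset.range L).filter fun i => n % b ^ (i + 1) < m % b ^ (i + 1)).card = β).card

/-- The base-`b` digit string of `n`, most significant digit first (empty for `n = 0`). -/
def wordOf (b n : ℕ) : List ℕ := (Nat.digits b n).reverse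

/-- `|n|_w`: the number of occurrences of `w` as a contiguous subword of the
base-`b` digit string of `n`. -/
def subwordCount (b n : ℕ) (w : List ℕ) : ℕ :=
  ((Finset.range ((wordOf b n).length + 1 - w.length)).filter fun s =>
    ((wordOf b n).drop s).take w.length = w).card

/-- `c(w_k ⋯ w_0)` for a word `w = [w_k, …, w_0]` (most significant letter first):
`(w_k/(w_k+1)) · (∏_{h=1}^{k−1} (b−w_{k−h})/(w_{k−h}+1)) · (b−w_0−1)/(w_0+1)`. -/
def cword (b : ℕ) (w : List ℕ) : ℚ :=
  ((w.getD 0 0 : ℚ) / ((w.getD 0 0 : ℚ) + 1)) *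
    (∏ h ∈ Finset.Ico 1 (w.length - 1),
      ((b : ℚ) - (w.getD h 0 : ℚ)) / ((w.getD h 0 : ℚ) + 1)) *
    (((b : ℚ) - (w.getD (w.length - 1) 0 : ℚ) - 1) / ((w.getD (w.length - 1) 0 : ℚ) + 1))

/-- The sum `Σ c(v)c(w)⋯c(z)` over all sets of pairwise nonoverlapping contiguous subwords
of `W` (identified by their position intervals: a pair `(s, len)` denotes the subword
occupying positions `s, …, s+len-1`) whose multiset of lengths equals `P`. -/
def nonoverlapSum (b : ℕ) (W : List ℕ) (P : Multiset ℕ) : ℚ :=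
  ∑ S ∈ ((Finset.range W.length ×ˢ Finset.Icc 1 W.length).powerset.filter fun S =>
      Multiset.map Prod.snd S.val = P ∧
      (∀ q ∈ S, q.1 + q.2 ≤ W.length) ∧
      (∀ q ∈ S, ∀ r ∈ S, q ≠ r → q.1 + q.2 ≤ r.1 ∨ r.1 + r.2 ≤ q.1)),
    ∏ q ∈ S, cword b ((W.drop q.1).take q.2)

/-!
Work with the generating function `Aₙ = ∑_{m ≤ n} X ^ v_p(C(n, m))` together with the companion
`Bₙ = ∑_{m < n} X ^ v_p(n! / (m! (n - 1 - m)!))`. Since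
`v_p((pn + d)!) = n + v_p(n!)` for `d < p`, appending a base-`p` digit `d` to `n` acts on the pair
linearly:
`A_{pn+d} = (d + 1) Aₙ + (p - d - 1) X Bₙ` and `B_{pn+d} = d Aₙ + (p - d) X Bₙ`.
Expanding the resulting product of `2 × 2` matrices, a path that starts and ends in state `A` is
determined by its maximal excursions to state `B`. Those are disjoint blocks of at least two
consecutive digits, and after division by `∏ (nᵢ + 1)` the block spelling the word `w` contributes
`c(w) X ^ (|w| - 1)`. Since `p ^ α ∤ C(n, m)` means `v_p(C(n, m)) < α`, summing the coefficients of
`Aₙ` of degree below `α` gives the count.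
-/

section IntervalPackings

open Finset

/-- The sets of pairwise disjoint intervals of length at least `2` inside `{0, …, L - 1}`. An
interval is encoded, as in `nonoverlapSum`, by its starting point and its length. -/
def intervalPackings (L : ℕ) : Finset (Finset (ℕ × ℕ)) :=
  (range L ×ˢ Icc 1 L).powerset.filter fun S =>
    (∀ q ∈ S, 2 ≤ q.2 ∧ q.1 + q.2 ≤ L) ∧
    (∀ q ∈ S, ∀ r ∈ S, q ≠ r → q.1 + q.2 ≤ r.1 ∨ r.1 + r.2 ≤ q.1)

lemma mem_intervalPackings {L : ℕ} {S : Finset (ℕ × ℕ)} :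
    S ∈ intervalPackings L ↔
      (∀ q ∈ S, 2 ≤ q.2 ∧ q.1 + q.2 ≤ L) ∧
      (∀ q ∈ S, ∀ r ∈ S, q ≠ r → q.1 + q.2 ≤ r.1 ∨ r.1 + r.2 ≤ q.1) := by
  simp only [intervalPackings, mem_filter, mem_powerset, and_iff_right_iff_imp]
  rintro ⟨bounds, -⟩ q hq
  have := bounds q hq
  simp only [mem_product, mem_range, mem_Icc]
  omega

lemma intervalPackings_zero : intervalPackings 0 = {∅} := by
  ext S
  rw [mem_intervalPackings, mem_singleton]
  refine ⟨fun ⟨bounds, _⟩ => eq_empty_of_forall_notMem fun q hq => ?_, ?_⟩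
  · have := bounds q hq
    omega
  · rintro rfl
    simp

lemma filter_intervalPackings_succ (L : ℕ) :
    (intervalPackings (L + 1)).filter (fun S => ∀ q ∈ S, q.1 + q.2 ≤ L) = intervalPackings L := by
  ext S
  simp only [mem_filter, mem_intervalPackings]
  constructor
  · rintro ⟨⟨bounds, disjoint⟩, ends_le⟩
    exact ⟨fun q hq => ⟨(bounds q hq).1, ends_le q hq⟩, disjoint⟩
  · rintro ⟨bounds, disjoint⟩
    exact ⟨⟨fun q hq => ⟨(bounds q hq).1, (bounds q hq).2.trans L.le_succ⟩, disjoint⟩,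
      fun q hq => (bounds q hq).2⟩

lemma notMem_of_mem_intervalPackings {s l : ℕ} {S : Finset (ℕ × ℕ)}
    (hS : S ∈ intervalPackings s) : (s, l) ∉ S := by
  intro hq
  have := (mem_intervalPackings.1 hS).1 _ hq
  dsimp only at this
  omega

lemma insert_mem_intervalPackings {s l : ℕ} (hl : 2 ≤ l) {S : Finset (ℕ × ℕ)}
    (hS : S ∈ intervalPackings s) : insert (s, l) S ∈ intervalPackings (s + l) := by
  obtain ⟨bounds, disjoint⟩ := mem_intervalPackings.1 hS
  refine mem_intervalPackings.2 ⟨?_, ?_⟩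
  · refine forall_mem_insert _ _ _ |>.2 ⟨⟨hl, le_rfl⟩, fun q hq => ?_⟩
    have := bounds q hq
    omega
  · intro q hq r hr hne
    rcases mem_insert.1 hq with rfl | hq <;> rcases mem_insert.1 hr with rfl | hr
    · exact absurd rfl hne
    · exact Or.inr (bounds r hr).2
    · exact Or.inl (bounds q hq).2
    · exact disjoint q hq r hr hne

lemma erase_mem_intervalPackings {s l : ℕ} {S : Finset (ℕ × ℕ)}
    (hS : S ∈ intervalPackings (s + l)) (hq : (s, l) ∈ S) :
    S.erase (s, l) ∈ intervalPackings s := by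
  obtain ⟨bounds, disjoint⟩ := mem_intervalPackings.1 hS
  refine mem_intervalPackings.2 ⟨fun r hr => ?_, fun q hq r hr =>
    disjoint q (mem_of_mem_erase hq) r (mem_of_mem_erase hr)⟩
  obtain ⟨hne, hr⟩ := mem_erase.1 hr
  have := bounds r hr
  have := disjoint r hr _ hq hne
  dsimp only at this
  omega

variable {R : Type*} [CommSemiring R]

/-- The generating function of interval packings of `{0, …, L - 1}` with weight `f` on each
interval. -/
def packingSum (f : ℕ × ℕ → R) (L : ℕ) : R :=
  ∑ S ∈ intervalPackings L, ∏ q ∈ S, f q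

lemma packingSum_zero (f : ℕ × ℕ → R) : packingSum f 0 = 1 := by
  simp [packingSum, intervalPackings_zero]

lemma sum_intervalPackings_reaching_end (f : ℕ × ℕ → R) (L : ℕ) :
    ∑ S ∈ intervalPackings (L + 1) with ¬ ∀ q ∈ S, q.1 + q.2 ≤ L, ∏ q ∈ S, f q =
      ∑ s ∈ range L, f (s, L + 1 - s) * packingSum f s := by
  simp only [packingSum, mul_sum]
  rw [sum_sigma']
  symm
  refine sum_bij (fun x _ => insert (x.1, L + 1 - x.1) x.2) ?_ ?_ ?_ ?_
  · rintro ⟨s, S⟩ hx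
    simp only [mem_sigma, mem_range] at hx
    have mem := insert_mem_intervalPackings (l := L + 1 - s) (by omega) hx.2
    rw [show s + (L + 1 - s) = L + 1 by omega] at mem
    refine mem_filter.2 ⟨mem, fun ends_le => ?_⟩
    have := ends_le _ (mem_insert_self _ _)
    dsimp only at this
    omega
  · rintro ⟨s, S⟩ hx ⟨t, T⟩ hy h
    simp only [mem_sigma, mem_range] at hx hy h
    obtain rfl : s = t := by
      have hs : (s, L + 1 - s) ∈ insert (t, L + 1 - t) T := h ▸ mem_insert_self _ _
      rcases mem_insert.1 hs with heq | hT
      · exact (Prod.mk.inj heq).1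
      · have := (mem_intervalPackings.1 hy.2).1 _ hT
        dsimp only at this
        omega
    rw [← erase_insert (notMem_of_mem_intervalPackings hx.2), h,
      erase_insert (notMem_of_mem_intervalPackings hy.2)]
  · intro S hS
    obtain ⟨hS, reaches⟩ := mem_filter.1 hS
    push Not at reaches
    obtain ⟨⟨s, l⟩, hq, hl⟩ := reaches
    have bounds := (mem_intervalPackings.1 hS).1 _ hq
    dsimp only at hl bounds
    obtain rfl : l = L + 1 - s := by omega
    rw [show L + 1 = s + (L + 1 - s) by omega] at hS
    have hs : s < L := by omega
    exact ⟨⟨s, S.erase (s, L + 1 - s)⟩,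
      mem_sigma.2 ⟨mem_range.2 hs, erase_mem_intervalPackings hS hq⟩, insert_erase hq⟩
  · rintro ⟨s, S⟩ hx
    rw [prod_insert (notMem_of_mem_intervalPackings (mem_sigma.1 hx).2)]

lemma packingSum_succ (f : ℕ × ℕ → R) (L : ℕ) :
    packingSum f (L + 1) =
      packingSum f L + ∑ s ∈ range L, f (s, L + 1 - s) * packingSum f s := by
  rw [packingSum, ← sum_filter_add_sum_filter_not _ (fun S => ∀ q ∈ S, q.1 + q.2 ≤ L),
    filter_intervalPackings_succ, sum_intervalPackings_reaching_end, ← packingSum]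

end IntervalPackings

section TransferRecurrence

open Finset

variable {R : Type*} [CommSemiring R] (u v y : ℕ → R)

/-- The weight of an interval whose first, intermediate and last points are weighted by `u`, `v`
and `y` respectively. -/
def intervalWeight (q : ℕ × ℕ) : R :=
  u q.1 * (∏ h ∈ Ico (q.1 + 1) (q.1 + q.2 - 1), v h) * y (q.1 + q.2 - 1)

/-- The generating function of interval packings followed by one interval that reaches the end of
`{0, …, L - 1}` and is not yet closed, so that it carries no factor from `y`. -/
def openPackingSum (L : ℕ) : R :=
  ∑ s ∈ range L, u s * (∏ h ∈ Ico (s + 1) L, v h) * packingSum (intervalWeight u v y) s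

lemma openPackingSum_succ (L : ℕ) :
    openPackingSum u v y (L + 1) =
      u L * packingSum (intervalWeight u v y) L + v L * openPackingSum u v y L := by
  rw [openPackingSum, sum_range_succ, add_comm, Ico_self, prod_empty, mul_one, openPackingSum,
    mul_sum]
  congr 1
  refine sum_congr rfl fun s hs => ?_
  rw [prod_Ico_succ_top (mem_range.1 hs)]
  ring

lemma packingSum_intervalWeight_succ (L : ℕ) :
    packingSum (intervalWeight u v y) (L + 1) =
      packingSum (intervalWeight u v y) L + y L * openPackingSum u v y L := by
  rw [packingSum_succ, openPackingSum, mul_sum]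
  congr 1
  refine sum_congr rfl fun s hs => ?_
  have hs := mem_range.1 hs
  rw [intervalWeight, show s + (L + 1 - s) - 1 = L by omega]
  ring

variable {u v y}

theorem eq_prod_mul_packingSum_of_recurrence {t G H : ℕ → R} {N : ℕ}
    (hG_zero : G 0 = 1) (hH_zero : H 0 = 0)
    (hG_succ : ∀ L < N, G (L + 1) = t L * (G L + y L * H L))
    (hH_succ : ∀ L < N, H (L + 1) = t L * (u L * G L + v L * H L)) :
    G N = (∏ i ∈ range N, t i) * packingSum (intervalWeight u v y) N := by
  suffices ∀ L ≤ N, G L = (∏ i ∈ range L, t i) * packingSum (intervalWeight u v y) L ∧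
      H L = (∏ i ∈ range L, t i) * openPackingSum u v y L from (this N le_rfl).1
  intro L hL
  induction L with
  | zero => simp [hG_zero, hH_zero, packingSum_zero, openPackingSum]
  | succ L ih =>
    obtain ⟨ihG, ihH⟩ := ih (by omega)
    rw [hG_succ L hL, hH_succ L hL, ihG, ihH, prod_range_succ, packingSum_intervalWeight_succ,
      openPackingSum_succ]
    constructor <;> ring

end TransferRecurrence

section FactorialRatios

open Finset
open scoped Nat

lemma sum_range_mul_add_eq_sum_residues {M : Type*} [AddCommMonoid M] (g : ℕ → M) (p n : ℕ)
    {t : ℕ} (ht : t ≤ p) :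
    ∑ k ∈ range (p * n + t), g k =
      ∑ m ∈ range (n + 1), ∑ e ∈ range t, g (p * m + e) +
      ∑ m ∈ range n, ∑ e ∈ Ico t p, g (p * m + e) := by
  have full_blocks : ∑ k ∈ range (p * n), g k =
      ∑ m ∈ range n, ∑ e ∈ range p, g (p * m + e) := by
    induction n with
    | zero => simp
    | succ n ih => rw [Nat.mul_succ, sum_range_add, ih, sum_range_succ]
  rw [sum_range_add, full_blocks, sum_range_succ, add_right_comm, ← sum_add_distrib]
  simp only [sum_range_add_sum_Ico _ ht]

/-- The `p`-adic valuation of `n! / (a! b!)`, which is an integer as soon as `a + b ≤ n`. -/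
def factorialRatioVal (p n a b : ℕ) : ℕ := padicValNat p (n ! / (a ! * b !))

lemma factorialRatioVal_add {p n a b : ℕ} [Fact p.Prime] (h : a + b ≤ n) :
    factorialRatioVal p n a b + (padicValNat p a ! + padicValNat p b !) = padicValNat p n ! := by
  have dvd : a ! * b ! ∣ n ! :=
    (Nat.factorial_mul_factorial_dvd_factorial_add a b).trans (Nat.factorial_dvd_factorial h)
  rw [factorialRatioVal, ← padicValNat.mul a.factorial_ne_zero b.factorial_ne_zero,
    ← padicValNat.mul (Nat.div_pos (Nat.le_of_dvd n.factorial_pos dvd) (by positivity)).ne'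
      (by positivity), Nat.div_mul_cancel dvd]

variable {p : ℕ} [Fact p.Prime]

lemma factorialRatioVal_mul_add {n a b d e f : ℕ} (hd : d < p) (he : e < p) (hf : f < p)
    (h : (p * a + e) + (p * b + f) ≤ p * n + d) :
    factorialRatioVal p (p * n + d) (p * a + e) (p * b + f) =
      factorialRatioVal p n a b + (n - (a + b)) := by
  have quotients_le : a + b ≤ n := by
    refine Nat.le_of_lt_succ (Nat.lt_of_mul_lt_mul_left (a := p) ?_)
    rw [mul_add, Nat.mul_succ]
    omega
  have ratio := factorialRatioVal_add (p := p) quotients_le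
  have ratio' := factorialRatioVal_add (p := p) h
  simp only [padicValNat_factorial_mul_add _ hd, padicValNat_factorial_mul_add _ he,
    padicValNat_factorial_mul_add _ hf, padicValNat_factorial_mul] at ratio'
  omega

lemma factorialRatioVal_mul_add_of_lt {n m d e t : ℕ} (hd : d < p) (ht : t ≤ d + 1) (hm : m ≤ n)
    (he : e < t) :
    factorialRatioVal p (p * n + d) (p * m + e) (p * n + t - 1 - (p * m + e)) =
      factorialRatioVal p n m (n - m) := by
  obtain ⟨k, rfl⟩ := Nat.exists_eq_add_of_le hm
  rw [show p * (m + k) + t - 1 - (p * m + e) = p * k + (t - 1 - e) by rw [mul_add]; omega,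
    factorialRatioVal_mul_add hd (by omega) (by omega) (by rw [mul_add]; omega),
    Nat.sub_self, add_zero, Nat.add_sub_cancel_left]

lemma factorialRatioVal_mul_add_of_ge {n m d e t : ℕ} (hd : d < p) (ht : t ≤ d + 1) (hm : m < n)
    (hte : t ≤ e) (he : e < p) :
    factorialRatioVal p (p * n + d) (p * m + e) (p * n + t - 1 - (p * m + e)) =
      factorialRatioVal p n m (n - 1 - m) + 1 := by
  obtain ⟨k, rfl⟩ := Nat.exists_eq_add_of_lt hm
  rw [show p * (m + k + 1) + t - 1 - (p * m + e) = p * k + (p + t - 1 - e) by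
      rw [mul_add, mul_add]; omega,
    factorialRatioVal_mul_add hd he (by omega) (by rw [mul_add, mul_add]; omega),
    Nat.add_sub_cancel_left, Nat.add_sub_cancel, Nat.add_sub_cancel_left]

variable {R : Type*} [CommSemiring R]

/-- The sum of `x ^ v_p(n! / (a! b!))` over the `k` pairs with `a + b = k - 1`. For `k = n + 1` it
is the generating function of the valuations on row `n` of Pascal's triangle; `k = n` gives its
companion. -/
def factorialRatioSum (p : ℕ) (x : R) (n k : ℕ) : R :=
  ∑ a ∈ range k, x ^ factorialRatioVal p n a (k - 1 - a)

lemma factorialRatioSum_succ_eq_sum_choose (p : ℕ) (x : R) (n : ℕ) :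
    factorialRatioSum p x n (n + 1) = ∑ m ∈ range (n + 1), x ^ padicValNat p (n.choose m) := by
  refine sum_congr rfl fun m hm => ?_
  rw [factorialRatioVal, Nat.choose_eq_factorial_div_factorial (mem_range_succ_iff.1 hm),
    Nat.add_sub_cancel]

theorem factorialRatioSum_mul_add (x : R) (n : ℕ) {d t : ℕ} (hd : d < p) (ht : t ≤ d + 1) :
    factorialRatioSum p x (p * n + d) (p * n + t) =
      t * factorialRatioSum p x n (n + 1) +
        ((p - t : ℕ) : R) * (x * factorialRatioSum p x n n) := by
  rw [factorialRatioSum, sum_range_mul_add_eq_sum_residues _ _ _ (ht.trans hd),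
    factorialRatioSum, factorialRatioSum, mul_sum, mul_sum, mul_sum]
  congr 1 <;> refine sum_congr rfl fun m hm => ?_
  · have hm := mem_range_succ_iff.1 hm
    rw [sum_congr rfl fun e he => by
      rw [factorialRatioVal_mul_add_of_lt hd ht hm (mem_range.1 he)]]
    simp
  · have hm := mem_range.1 hm
    rw [sum_congr rfl fun e he => by
      rw [factorialRatioVal_mul_add_of_ge hd ht hm (mem_Ico.1 he).1 (mem_Ico.1 he).2]]
    simp [pow_succ']

end FactorialRatios

section WordExpansion

open Finset Polynomial

lemma getD_take_drop {α : Type*} (W : List α) (z : α) (s : ℕ) {l h : ℕ} (hh : h < l) :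
    ((W.drop s).take l).getD h z = W.getD (s + h) z := by
  rw [List.getD_eq_getElem?_getD, List.getD_eq_getElem?_getD, List.getElem?_take_of_lt hh,
    List.getElem?_drop]

lemma cword_take_drop (b : ℕ) (W : List ℕ) {s l : ℕ} (hl : 1 ≤ l) (hW : s + l ≤ W.length) :
    cword b ((W.drop s).take l) =
      intervalWeight (fun i => (W.getD i 0 : ℚ) / (W.getD i 0 + 1))
        (fun i => ((b : ℚ) - W.getD i 0) / (W.getD i 0 + 1))
        (fun i => ((b : ℚ) - W.getD i 0 - 1) / (W.getD i 0 + 1)) (s, l) := by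
  have hlen : ((W.drop s).take l).length = l := by
    rw [List.length_take, List.length_drop]
    omega
  rw [cword, hlen, intervalWeight, getD_take_drop W 0 s hl, getD_take_drop W 0 s (by omega),
    add_zero, ← Nat.add_sub_assoc hl, add_comm s 1, show s + l - 1 = l - 1 + s by omega,
    ← prod_Ico_add]
  congr 2
  refine prod_congr rfl fun h hh => ?_
  have := (mem_Ico.1 hh).2
  rw [getD_take_drop W 0 s (by omega)]

lemma intervalWeight_C_mul_X {R : Type*} [CommSemiring R] (u v y : ℕ → R) {q : ℕ × ℕ}
    (hq : 2 ≤ q.2) :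
    intervalWeight (fun i => C (u i)) (fun i => C (v i) * X) (fun i => C (y i) * X) q =
      C (intervalWeight u v y q) * X ^ (q.2 - 1) := by
  have card : q.2 - 1 = q.1 + q.2 - 1 - (q.1 + 1) + 1 := by omega
  simp only [intervalWeight, prod_mul_distrib, prod_const, Nat.card_Ico, C_mul, map_prod, card,
    pow_succ]
  ring

lemma ofDigits_reverse_take_succ (b : ℕ) {W : List ℕ} {L : ℕ} (hL : L < W.length) :
    Nat.ofDigits b (W.take (L + 1)).reverse =
      b * Nat.ofDigits b (W.take L).reverse + W.getD L 0 := by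
  rw [List.take_succ_eq_append_getElem hL, List.reverse_append, List.reverse_singleton,
    List.singleton_append, Nat.ofDigits_cons, List.getD_eq_getElem _ _ hL, add_comm]

lemma C_succ_mul_C_div_succ (d : ℕ) (a : ℚ) : C ((d : ℚ) + 1) * C (a / (d + 1)) = C a := by
  rw [← C_mul, mul_div_cancel₀ _ (by positivity)]

lemma factorialRatioSum_mul_add_succ_eq_C_mul {p : ℕ} [Fact p.Prime] (n : ℕ) {d : ℕ} (hd : d < p) :
    factorialRatioSum p (X : ℚ[X]) (p * n + d) (p * n + d + 1) =
      C ((d : ℚ) + 1) * (factorialRatioSum p X n (n + 1) +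
        C (((p : ℚ) - d - 1) / (d + 1)) * X * factorialRatioSum p X n n) := by
  rw [add_assoc, factorialRatioSum_mul_add _ _ hd le_rfl, mul_add, ← mul_assoc, ← mul_assoc,
    ← mul_assoc, C_succ_mul_C_div_succ, Nat.cast_sub (Nat.succ_le_of_lt hd)]
  simp only [C_add, C_sub, C_1, C_eq_natCast, Nat.cast_succ]
  ring

lemma factorialRatioSum_mul_add_eq_C_mul {p : ℕ} [Fact p.Prime] (n : ℕ) {d : ℕ} (hd : d < p) :
    factorialRatioSum p (X : ℚ[X]) (p * n + d) (p * n + d) =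
      C ((d : ℚ) + 1) * (C ((d : ℚ) / (d + 1)) * factorialRatioSum p X n (n + 1) +
        C (((p : ℚ) - d) / (d + 1)) * X * factorialRatioSum p X n n) := by
  rw [factorialRatioSum_mul_add _ _ hd d.le_succ, mul_add, ← mul_assoc, ← mul_assoc, ← mul_assoc,
    ← mul_assoc, C_succ_mul_C_div_succ, C_succ_mul_C_div_succ, Nat.cast_sub hd.le]
  simp only [C_sub, C_eq_natCast, mul_assoc]

theorem factorialRatioSum_ofDigits (p : ℕ) [Fact p.Prime] {W : List ℕ} (hW : ∀ d ∈ W, d < p) :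
    factorialRatioSum p (X : ℚ[X]) (Nat.ofDigits p W.reverse) (Nat.ofDigits p W.reverse + 1) =
      C (∏ i ∈ range W.length, ((W.getD i 0 : ℚ) + 1)) *
        packingSum (fun q => C (cword p ((W.drop q.1).take q.2)) * X ^ (q.2 - 1)) W.length := by
  let value (L : ℕ) : ℕ := Nat.ofDigits p (W.take L).reverse
  have letter_lt (L : ℕ) (hL : L < W.length) : W.getD L 0 < p := by
    rw [List.getD_eq_getElem _ _ hL]
    exact hW _ (List.getElem_mem hL)
  have expansion := eq_prod_mul_packingSum_of_recurrence (N := W.length)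
    (G := fun L => factorialRatioSum p (X : ℚ[X]) (value L) (value L + 1))
    (H := fun L => factorialRatioSum p (X : ℚ[X]) (value L) (value L))
    (t := fun i => C ((W.getD i 0 : ℚ) + 1))
    (u := fun i => C ((W.getD i 0 : ℚ) / (W.getD i 0 + 1)))
    (v := fun i => C (((p : ℚ) - W.getD i 0) / (W.getD i 0 + 1)) * X)
    (y := fun i => C (((p : ℚ) - W.getD i 0 - 1) / (W.getD i 0 + 1)) * X)
    (by simp [value, factorialRatioSum, factorialRatioVal])
    (by simp [value, factorialRatioSum])
    (fun L hL => by
      simp only [value, ofDigits_reverse_take_succ p hL,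
        factorialRatioSum_mul_add_succ_eq_C_mul _ (letter_lt L hL)])
    (fun L hL => by
      simp only [value, ofDigits_reverse_take_succ p hL,
        factorialRatioSum_mul_add_eq_C_mul _ (letter_lt L hL)])
  simp only [value, List.take_length] at expansion
  rw [expansion, map_prod, packingSum, packingSum]
  congr 1
  refine sum_congr rfl fun S hS => prod_congr rfl fun q hq => ?_
  obtain ⟨two_le, le_length⟩ := (mem_intervalPackings.1 hS).1 q hq
  rw [intervalWeight_C_mul_X _ _ _ two_le, cword_take_drop p W (by omega) le_length]

end WordExpansion

section LowCoefficients

open Finset Polynomial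

/-- The sum of the coefficients of degree less than `α`. -/
noncomputable def coeffSumBelow {R : Type*} [Semiring R] (α : ℕ) : R[X] →ₗ[R] R :=
  ∑ k ∈ range α, lcoeff R k

lemma coeffSumBelow_C_mul_X_pow {R : Type*} [Semiring R] (α k : ℕ) (c : R) :
    coeffSumBelow α (C c * X ^ k) = if k < α then c else 0 := by
  simp [coeffSumBelow, coeff_X_pow]

lemma coeffSumBelow_factorialRatioSum (p : ℕ) [Fact p.Prime] (α n : ℕ) :
    coeffSumBelow α (factorialRatioSum p (X : ℚ[X]) n (n + 1)) = rowCount (p ^ α) n := by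
  rw [factorialRatioSum_succ_eq_sum_choose, map_sum, rowCount, card_filter, Nat.cast_sum]
  refine sum_congr rfl fun m hm => ?_
  have choose_ne_zero : n.choose m ≠ 0 := Nat.choose_ne_zero (mem_range_succ_iff.1 hm)
  rw [← one_mul (X ^ _), ← C_1, coeffSumBelow_C_mul_X_pow]
  simp [padicValNat_dvd_iff_le choose_ne_zero]

lemma coeffSumBelow_packingSum {R : Type*} [CommSemiring R] (α : ℕ) (f : ℕ × ℕ → R) (L : ℕ) :
    coeffSumBelow α (packingSum (fun q => C (f q) * X ^ (q.2 - 1)) L) =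
      ∑ S ∈ intervalPackings L with ∑ q ∈ S, (q.2 - 1) < α, ∏ q ∈ S, f q := by
  rw [packingSum, map_sum, sum_filter]
  refine sum_congr rfl fun S _ => ?_
  rw [prod_mul_distrib, prod_pow_eq_pow_sum, ← map_prod, coeffSumBelow_C_mul_X_pow]

theorem rowCount_ofDigits (p : ℕ) [Fact p.Prime] (α : ℕ) {W : List ℕ} (hW : ∀ d ∈ W, d < p) :
    (rowCount (p ^ α) (Nat.ofDigits p W.reverse) : ℚ) =
      (∏ i ∈ range W.length, ((W.getD i 0 : ℚ) + 1)) *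
        ∑ S ∈ intervalPackings W.length with ∑ q ∈ S, (q.2 - 1) < α,
          ∏ q ∈ S, cword p ((W.drop q.1).take q.2) := by
  rw [← coeffSumBelow_factorialRatioSum, factorialRatioSum_ofDigits p hW, ← smul_eq_C_mul,
    map_smul, coeffSumBelow_packingSum, smul_eq_mul]

end LowCoefficients

section LengthPartitions

open Finset

lemma sum_pred_lt_iff {ι : Type*} {S : Finset ι} {f : ι → ℕ} (hf : ∀ i ∈ S, 2 ≤ f i) {α : ℕ}
    (hα : 1 ≤ α) :
    ∑ i ∈ S, (f i - 1) < α ↔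
      ∑ i ∈ S, f i < 2 * (α - 1) + 1 ∧ ∑ i ∈ S, f i - (α - 1) ≤ S.card := by
  have sum_pred : ∑ i ∈ S, (f i - 1) = ∑ i ∈ S, f i - S.card := by
    rw [sum_tsub_distrib _ fun i hi => one_le_two.trans (hf i hi), card_eq_sum_ones]
  have two_mul_card_le : S.card * 2 ≤ ∑ i ∈ S, f i := card_nsmul_le_sum S f 2 hf
  omega

/-- The union of the sets `S_α(γ)` over `0 ≤ γ ≤ 2(α - 1)`. -/
def admissiblePartitions (α : ℕ) : Finset (Σ γ, Nat.Partition γ) :=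
  (range (2 * (α - 1) + 1)).sigma fun γ =>
    univ.filter fun P => γ - (α - 1) ≤ P.parts.card ∧ ∀ x ∈ P.parts, 2 ≤ x

/-- The partition formed by the lengths of the intervals in `S`, together with the number it
partitions. Intervals of length `0`, which do not occur in a packing, are dropped. -/
def lengthPartition (S : Finset (ℕ × ℕ)) : Σ γ, Nat.Partition γ :=
  ⟨_, .ofMultiset (S.val.map Prod.snd)⟩

lemma lengthPartition_parts {L : ℕ} {S : Finset (ℕ × ℕ)} (hS : S ∈ intervalPackings L) :
    (lengthPartition S).2.parts = S.val.map Prod.snd := by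
  refine Multiset.filter_eq_self.2 fun l hl => ?_
  obtain ⟨q, hq, rfl⟩ := Multiset.mem_map.1 hl
  have := (mem_intervalPackings.1 hS).1 q hq
  omega

lemma sigma_partition_ext {P Q : Σ γ, Nat.Partition γ} (h : P.2.parts = Q.2.parts) : P = Q := by
  obtain ⟨_, parts, parts_pos, rfl⟩ := P
  obtain ⟨_, parts', parts_pos', rfl⟩ := Q
  obtain rfl : parts = parts' := h
  rfl

lemma lengthPartition_eq_iff {L : ℕ} {S : Finset (ℕ × ℕ)} (hS : S ∈ intervalPackings L)
    {P : Σ γ, Nat.Partition γ} :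
    lengthPartition S = P ↔ S.val.map Prod.snd = P.2.parts := by
  rw [← lengthPartition_parts hS]
  exact ⟨fun h => h ▸ rfl, sigma_partition_ext⟩

lemma lengthPartition_mem_admissiblePartitions_iff {α : ℕ} (hα : 1 ≤ α) {L : ℕ}
    {S : Finset (ℕ × ℕ)} (hS : S ∈ intervalPackings L) :
    lengthPartition S ∈ admissiblePartitions α ↔ ∑ q ∈ S, (q.2 - 1) < α := by
  have two_le : ∀ q ∈ S, 2 ≤ q.2 := fun q hq => ((mem_intervalPackings.1 hS).1 q hq).1
  have two_le_parts : ∀ x ∈ S.val.map Prod.snd, 2 ≤ x := by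
    simpa only [Multiset.mem_map, forall_exists_index, and_imp, forall_apply_eq_imp_iff₂]
  rw [sum_pred_lt_iff two_le hα, admissiblePartitions, mem_sigma, mem_filter, mem_range,
    lengthPartition_parts hS, Multiset.card_map]
  exact and_congr_right fun _ => ⟨fun h => h.2.1, fun h => ⟨mem_univ _, h, two_le_parts⟩⟩

lemma nonoverlapSum_eq_sum_intervalPackings (b : ℕ) (W : List ℕ) {P : Multiset ℕ}
    (hP : ∀ x ∈ P, 2 ≤ x) :
    nonoverlapSum b W P = ∑ S ∈ intervalPackings W.length with S.val.map Prod.snd = P,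
      ∏ q ∈ S, cword b ((W.drop q.1).take q.2) := by
  refine sum_congr ?_ fun _ _ => rfl
  ext S
  simp only [intervalPackings, mem_filter, and_assoc, and_congr_right_iff]
  intro _
  constructor
  · rintro ⟨rfl, le_length, disjoint⟩
    exact ⟨fun q hq => ⟨hP _ (Multiset.mem_map_of_mem _ hq), le_length q hq⟩, disjoint, rfl⟩
  · rintro ⟨bounds, disjoint, lengths_eq⟩
    exact ⟨lengths_eq, fun q hq => (bounds q hq).2, disjoint⟩

theorem sum_admissiblePartitions_nonoverlapSum (b : ℕ) (W : List ℕ) {α : ℕ} (hα : 1 ≤ α) :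
    ∑ P ∈ admissiblePartitions α, nonoverlapSum b W P.2.parts =
      ∑ S ∈ intervalPackings W.length with ∑ q ∈ S, (q.2 - 1) < α,
        ∏ q ∈ S, cword b ((W.drop q.1).take q.2) := by
  calc
    _ = ∑ P ∈ admissiblePartitions α, ∑ S ∈ intervalPackings W.length with lengthPartition S = P,
          ∏ q ∈ S, cword b ((W.drop q.1).take q.2) := by
      refine sum_congr rfl fun P hP => ?_
      have two_le : ∀ x ∈ P.2.parts, 2 ≤ x := (mem_filter.1 (mem_sigma.1 hP).2).2.2
      rw [nonoverlapSum_eq_sum_intervalPackings b W two_le,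
        filter_congr fun S hS => (lengthPartition_eq_iff hS).symm]
    _ = ∑ S ∈ intervalPackings W.length with lengthPartition S ∈ admissiblePartitions α,
          ∏ q ∈ S, cword b ((W.drop q.1).take q.2) := sum_fiberwise_eq_sum_filter ..
    _ = _ := by
      rw [filter_congr fun S hS => lengthPartition_mem_admissiblePartitions_iff hα hS]

end LengthPartitions

lemma prod_range_length_getD_reverse {α M : Type*} [CommMonoid M] (l : List α) (z : α) (f : α → M) :
    ∏ i ∈ Finset.range l.length, f (l.reverse.getD i z) =
      ∏ i ∈ Finset.range l.length, f (l.getD i z) := by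
  rw [← Finset.prod_range_reflect]
  refine Finset.prod_congr rfl fun i hi => ?_
  have hi := Finset.mem_range.1 hi
  rw [List.getD_eq_getElem?_getD, List.getElem?_reverse (by omega), List.getD_eq_getElem?_getD,
    show l.length - 1 - (l.length - 1 - i) = i by omega]

/-- **Theorem 1 (main theorem).** For a prime `p`, `α ≥ 1` and `n ≥ 0` with base-`p` digits
`n_l ⋯ n_0`, the number of nonzero entries on row `n` of Pascal's triangle modulo `p^α` is
`a_{p^α}(n) = (∏ (n_i+1)) · Σ_{γ=0}^{2(α−1)} Σ_{P ∈ S_α(γ)} Σ_{nonoverlapping subwords} c(v)⋯c(z)`,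
where `S_α(γ)` is the set of partitions of `γ` into at least `max(0, γ−(α−1))` parts,
all parts at least 2. -/
theorem stmt0 (p : ℕ) (hp : p.Prime) (α : ℕ) (hα : 1 ≤ α) (n : ℕ) :
    (rowCount (p ^ α) n : ℚ) =
      (∏ i ∈ Finset.range (Nat.digits p n).length,
          (((Nat.digits p n).getD i 0 : ℚ) + 1)) *
        ∑ γ ∈ Finset.range (2 * (α - 1) + 1),
          ∑ P ∈ Finset.univ.filter (fun P : Nat.Partition γ =>
              γ - (α - 1) ≤ Multiset.card P.parts ∧ ∀ x ∈ P.parts, 2 ≤ x),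
            nonoverlapSum p (wordOf p n) P.parts := by
  have : Fact p.Prime := ⟨hp⟩
  have digit_lt : ∀ d ∈ wordOf p n, d < p := fun d hd =>
    Nat.digits_lt_base hp.one_lt (List.mem_reverse.1 hd)
  have expansion := rowCount_ofDigits p α digit_lt
  rw [← sum_admissiblePartitions_nonoverlapSum p _ hα, wordOf, List.reverse_reverse,
    Nat.ofDigits_digits, List.length_reverse,
    prod_range_length_getD_reverse _ 0 fun d : ℕ => (d : ℚ) + 1] at expansion
  rw [expansion, Finset.sum_sigma', admissiblePartitions, wordOf]
end

section
/- Let b ≥ 2, let β ≥ 0, and let n ≥ 0 with standard base-b digits n_l n_{l−1} ⋯ n_0. Then A_n(β) = A_n(0) · Σ_{γ=β}^{2β} Σ_{P ∈ S(γ, γ−β)} Σ_{P: nonoverlapping subwords of n} c(v)c(w)⋯c(z), the equality read in the rational numbers. -/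
/-!
Let `A` be the generating polynomial of the number of borrows in `n - m` over `m ≤ n`, and `B` the
one over `m < n` when a borrow already comes in at the units place. Appending a digit `d` to `n`
transforms the pair by `A ↦ (d + 1) A + (b - d - 1) X B` and `B ↦ d A + (b - d) X B`. After
dividing by `d + 1` this is a two-state process which stays in state `A` with weight `1`. Its
expansion therefore runs over the sets of disjoint excursions through state `B`; an excursion
occupies a subword `w` of length at least `2` and has weight `c(w) X ^ (|w| - 1)`. The coefficient
of `X ^ β` collects the sets of subwords with total length `γ` and `γ - β` members, and the
constant coefficient is the product of the `d + 1`, which is `A_n(0)`.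
-/

open Finset Polynomial

section NonoverlappingFamilies

/-- The sets of pairwise nonoverlapping subwords of length at least `2` of a word of length `L`.
As in `nonoverlapSum`, a pair `(s, k)` stands for the positions `s, …, s + k - 1`. -/
def nonoverlapFamilies (L : ℕ) : Finset (Finset (ℕ × ℕ)) :=
  (range L ×ˢ Icc 2 L).powerset.filter fun S =>
    (∀ q ∈ S, q.1 + q.2 ≤ L) ∧
      ∀ q ∈ S, ∀ r ∈ S, q ≠ r → q.1 + q.2 ≤ r.1 ∨ r.1 + r.2 ≤ q.1

lemma mem_nonoverlapFamilies {L : ℕ} {S : Finset (ℕ × ℕ)} :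
    S ∈ nonoverlapFamilies L ↔ (∀ q ∈ S, 2 ≤ q.2 ∧ q.1 + q.2 ≤ L) ∧
      ∀ q ∈ S, ∀ r ∈ S, q ≠ r → q.1 + q.2 ≤ r.1 ∨ r.1 + r.2 ≤ q.1 := by
  have bounds_iff (q : ℕ × ℕ) :
      (q ∈ range L ×ˢ Icc 2 L ∧ q.1 + q.2 ≤ L) ↔ 2 ≤ q.2 ∧ q.1 + q.2 ≤ L := by
    simp only [mem_product, mem_range, mem_Icc]
    omega
  simp only [nonoverlapFamilies, mem_filter, mem_powerset, subset_iff, ← and_assoc,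
    ← forall₂_and, bounds_iff]

lemma nonoverlapFamilies_zero : nonoverlapFamilies 0 = {∅} := by
  ext S
  rw [mem_nonoverlapFamilies, mem_singleton, eq_empty_iff_forall_notMem]
  exact ⟨fun h q hq => absurd (h.1 q hq) (by omega), fun h => by simp [h]⟩

lemma notMem_of_mem_nonoverlapFamilies {s k : ℕ} {S : Finset (ℕ × ℕ)}
    (hS : S ∈ nonoverlapFamilies s) : (s, k) ∉ S := fun h => by
  have := (mem_nonoverlapFamilies.1 hS).1 _ h
  dsimp only at this
  omega

lemma nonoverlapFamilies_eq_filter_succ (L : ℕ) :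
    nonoverlapFamilies L =
      {S ∈ nonoverlapFamilies (L + 1) | ¬ ∃ s ∈ range L, (s, L + 1 - s) ∈ S} := by
  ext S
  simp only [mem_filter, mem_nonoverlapFamilies, mem_range]
  constructor
  · rintro ⟨bounds, disj⟩
    refine ⟨⟨fun q hq => ⟨(bounds q hq).1, by grind⟩, disj⟩, ?_⟩
    rintro ⟨s, hs, hmem⟩
    have := (bounds _ hmem).2
    dsimp only at this
    omega
  · rintro ⟨⟨bounds, disj⟩, no_last⟩
    refine ⟨fun q hq => ⟨(bounds q hq).1, ?_⟩, disj⟩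
    by_contra hlt
    have := bounds q hq
    have q_eq : (q.1, L + 1 - q.1) = q := Prod.ext rfl (by dsimp only; omega)
    exact no_last ⟨q.1, by omega, q_eq ▸ hq⟩

lemma image_insert_nonoverlapFamilies {s L : ℕ} (hs : s < L) :
    (nonoverlapFamilies s).image (insert (s, L + 1 - s)) =
      {S ∈ nonoverlapFamilies (L + 1) | (s, L + 1 - s) ∈ S} := by
  ext S
  simp only [mem_image, mem_filter]
  constructor
  · rintro ⟨T, hT, rfl⟩
    obtain ⟨bounds, disj⟩ := mem_nonoverlapFamilies.1 hT
    refine ⟨mem_nonoverlapFamilies.2 ⟨?_, ?_⟩, mem_insert_self _ _⟩ <;> grind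
  · rintro ⟨hS, hmem⟩
    obtain ⟨bounds, disj⟩ := mem_nonoverlapFamilies.1 hS
    refine ⟨S.erase (s, L + 1 - s), mem_nonoverlapFamilies.2 ⟨fun q hq => ?_, ?_⟩,
      insert_erase hmem⟩
    · have q_bounds := bounds q (mem_of_mem_erase hq)
      have := disj q (mem_of_mem_erase hq) _ hmem (ne_of_mem_erase hq)
      dsimp only at this
      omega
    · exact fun q hq r hr => disj q (mem_of_mem_erase hq) r (mem_of_mem_erase hr)

lemma eq_of_mem_of_mem_nonoverlapFamilies_succ {L s t : ℕ} {S : Finset (ℕ × ℕ)}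
    (hS : S ∈ nonoverlapFamilies (L + 1)) (hs : s < L) (ht : t < L)
    (hsS : (s, L + 1 - s) ∈ S) (htS : (t, L + 1 - t) ∈ S) : s = t := by
  by_contra hne
  have := (mem_nonoverlapFamilies.1 hS).2 _ hsS _ htS (by simp [hne])
  dsimp only at this
  omega

variable {R : Type*} [CommSemiring R]

/-- The generating function of the nonoverlapping families in a word of length `L`, where a family
has as weight the product of the weights `w (s, k)` of its members. -/
def nonoverlapGF (w : ℕ × ℕ → R) (L : ℕ) : R :=
  ∑ S ∈ nonoverlapFamilies L, ∏ q ∈ S, w q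

lemma nonoverlapGF_zero (w : ℕ × ℕ → R) : nonoverlapGF w 0 = 1 := by
  simp [nonoverlapGF, nonoverlapFamilies_zero]

lemma sum_filter_mem_nonoverlapFamilies (w : ℕ × ℕ → R) {s L : ℕ} (hs : s < L) :
    ∑ S ∈ nonoverlapFamilies (L + 1) with (s, L + 1 - s) ∈ S, ∏ q ∈ S, w q =
      w (s, L + 1 - s) * nonoverlapGF w s := by
  rw [← image_insert_nonoverlapFamilies hs, sum_image, nonoverlapGF, mul_sum]
  · exact sum_congr rfl fun S hS => prod_insert (notMem_of_mem_nonoverlapFamilies hS)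
  · intro S hS T hT h
    rw [← erase_insert (notMem_of_mem_nonoverlapFamilies hS), h,
      erase_insert (notMem_of_mem_nonoverlapFamilies hT)]

lemma nonoverlapGF_succ (w : ℕ × ℕ → R) (L : ℕ) :
    nonoverlapGF w (L + 1) =
      nonoverlapGF w L + ∑ s ∈ range L, w (s, L + 1 - s) * nonoverlapGF w s := by
  have with_last : {S ∈ nonoverlapFamilies (L + 1) | ∃ s ∈ range L, (s, L + 1 - s) ∈ S} =
      (range L).biUnion fun s => {S ∈ nonoverlapFamilies (L + 1) | (s, L + 1 - s) ∈ S} := by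
    ext S
    simp only [mem_filter, mem_biUnion]
    tauto
  rw [nonoverlapGF, ← sum_filter_add_sum_filter_not _
    fun S => ∃ s ∈ range L, (s, L + 1 - s) ∈ S, ← nonoverlapFamilies_eq_filter_succ, with_last,
    sum_biUnion, add_comm]
  · exact congrArg _ (sum_congr rfl fun s hs =>
      sum_filter_mem_nonoverlapFamilies w (mem_range.1 hs))
  · intro s hs t ht hne
    refine disjoint_filter.2 fun S hS hsS htS => hne ?_
    exact eq_of_mem_of_mem_nonoverlapFamilies_succ hS (mem_range.1 hs) (mem_range.1 ht) hsS htS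

end NonoverlappingFamilies

section TwoStateRecurrence

variable {R : Type*} [CommSemiring R] {a p q t : ℕ → R}

/-- The weight of an excursion of a two-state process on the positions `s, …, s + k - 1`: it leaves
the base state with weight `p`, stays away with weights `q`, and returns with weight `t`. Meant for
`2 ≤ k`. -/
def excursionWeight (p q t : ℕ → R) (I : ℕ × ℕ) : R :=
  p I.1 * (∏ h ∈ Ico (I.1 + 1) (I.1 + I.2 - 1), q h) * t (I.1 + I.2 - 1)

/-- The total weight of the paths of length `L` of a two-state process that end with an unfinished
excursion, by the position `s` at which this excursion starts. -/
def unfinishedExcursionSum (p q t : ℕ → R) (L : ℕ) : R :=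
  ∑ s ∈ range L, p s * (∏ h ∈ Ico (s + 1) L, q h) * nonoverlapGF (excursionWeight p q t) s

lemma unfinishedExcursionSum_succ (p q t : ℕ → R) (L : ℕ) :
    unfinishedExcursionSum p q t (L + 1) =
      p L * nonoverlapGF (excursionWeight p q t) L + q L * unfinishedExcursionSum p q t L := by
  have extend : ∀ s ∈ range L,
      p s * (∏ h ∈ Ico (s + 1) (L + 1), q h) * nonoverlapGF (excursionWeight p q t) s =
        q L * (p s * (∏ h ∈ Ico (s + 1) L, q h) * nonoverlapGF (excursionWeight p q t) s) := by
    intro s hs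
    rw [prod_Ico_succ_top (mem_range.1 hs)]
    ring
  rw [unfinishedExcursionSum, sum_range_succ, sum_congr rfl extend, ← mul_sum, Ico_self,
    prod_empty, mul_one, add_comm, unfinishedExcursionSum]

lemma nonoverlapGF_excursionWeight_succ (p q t : ℕ → R) (L : ℕ) :
    nonoverlapGF (excursionWeight p q t) (L + 1) =
      nonoverlapGF (excursionWeight p q t) L + t L * unfinishedExcursionSum p q t L := by
  rw [nonoverlapGF_succ, unfinishedExcursionSum, mul_sum]
  refine congrArg _ (sum_congr rfl fun s hs => ?_)
  have last_eq : s + (L + 1 - s) - 1 = L := by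
    have := mem_range.1 hs
    omega
  rw [excursionWeight, last_eq]
  ring

theorem twoState_eq_prod_mul_nonoverlapGF {A B : ℕ → R} (hA₀ : A 0 = 1) (hB₀ : B 0 = 0)
    (hA : ∀ L, A (L + 1) = a L * (A L + t L * B L))
    (hB : ∀ L, B (L + 1) = a L * (p L * A L + q L * B L)) (L : ℕ) :
    A L = (∏ i ∈ range L, a i) * nonoverlapGF (excursionWeight p q t) L := by
  suffices A L = (∏ i ∈ range L, a i) * nonoverlapGF (excursionWeight p q t) L ∧
      B L = (∏ i ∈ range L, a i) * unfinishedExcursionSum p q t L from this.1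
  induction L with
  | zero => simp [hA₀, hB₀, nonoverlapGF_zero, unfinishedExcursionSum]
  | succ L ih =>
    rw [hA, hB, ih.1, ih.2, prod_range_succ, nonoverlapGF_excursionWeight_succ,
      unfinishedExcursionSum_succ]
    constructor <;> ring

lemma excursionWeight_C_mul_X (p q t : ℕ → R) (s : ℕ) {k : ℕ} (hk : 2 ≤ k) :
    excursionWeight (fun i => C (p i)) (fun i => C (q i) * X) (fun i => C (t i) * X) (s, k) =
      C (excursionWeight p q t (s, k)) * X ^ (k - 1) := by
  have exponent : k - 1 = (s + k - 1 - (s + 1)) + 1 := by omega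
  simp only [excursionWeight, prod_mul_distrib, prod_const, Nat.card_Ico, map_mul, map_prod]
  rw [exponent, pow_succ]
  ring

end TwoStateRecurrence

section ResidueComparison

lemma mul_add_lt_mul_add_iff_lex {b x y d e : ℕ} (hd : d < b) (he : e < b) :
    b * x + d < b * y + e ↔ x < y ∨ x = y ∧ d < e := by
  rcases lt_trichotomy x y with hxy | rfl | hxy
  · have := Nat.mul_le_mul_left b (Nat.succ_le_of_lt hxy)
    rw [Nat.mul_succ] at this
    omega
  · omega
  · have := Nat.mul_le_mul_left b (Nat.succ_le_of_lt hxy)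
    rw [Nat.mul_succ] at this
    omega

lemma mul_add_mod_pow_succ {b r : ℕ} (hr : r < b) (m i : ℕ) :
    (b * m + r) % b ^ (i + 1) = b * (m % b ^ i) + r := by
  rw [pow_succ', Nat.mod_mul, Nat.mul_add_mod, Nat.mod_eq_of_lt hr,
    Nat.mul_add_div (Nat.zero_lt_of_lt hr), Nat.div_eq_of_lt hr, add_zero, add_comm]

/-- The number of positions `i < L` at which the residues of `n` and `m` modulo `b ^ (i + 1)` are
related by `r`. For `r = (· < ·)` these are the borrows of `n - m`, and for `r = (· ≤ ·)` the
borrows when there is an incoming borrow at the units place. -/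
def residueCount (r : ℕ → ℕ → Prop) [DecidableRel r] (b L n m : ℕ) : ℕ :=
  #{i ∈ range L | r (n % b ^ (i + 1)) (m % b ^ (i + 1))}

variable {b d e : ℕ}

lemma residueCount_succ {r r' : ℕ → ℕ → Prop} [DecidableRel r] [DecidableRel r'] (hd : d < b)
    (he : e < b) (hr : ∀ x y, r (b * x + d) (b * y + e) ↔ r' x y) (L n m : ℕ) :
    residueCount r b (L + 1) (b * n + d) (b * m + e) =
      residueCount r' b L n m + if r d e then 1 else 0 := by
  have units : r' 0 0 ↔ r d e := by simpa only [mul_zero, zero_add] using (hr 0 0).symm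
  simp only [residueCount, card_filter, sum_range_succ', mul_add_mod_pow_succ hd,
    mul_add_mod_pow_succ he, hr, pow_zero, Nat.mod_one, units]

variable (L n m : ℕ)

lemma residueCount_lt_succ_of_le (hd : d < b) (h : e ≤ d) :
    residueCount (· < ·) b (L + 1) (b * n + d) (b * m + e) = residueCount (· < ·) b L n m := by
  have he : e < b := h.trans_lt hd
  rw [residueCount_succ (r' := (· < ·)) hd he fun x y => by
    rw [mul_add_lt_mul_add_iff_lex hd he]; omega, if_neg h.not_gt, add_zero]

lemma residueCount_lt_succ_of_lt (he : e < b) (h : d < e) :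
    residueCount (· < ·) b (L + 1) (b * n + d) (b * m + e) =
      residueCount (· ≤ ·) b L n m + 1 := by
  have hd : d < b := h.trans he
  rw [residueCount_succ (r' := (· ≤ ·)) hd he fun x y => by
    rw [mul_add_lt_mul_add_iff_lex hd he]; omega, if_pos h]

lemma residueCount_le_succ_of_lt (hd : d < b) (h : e < d) :
    residueCount (· ≤ ·) b (L + 1) (b * n + d) (b * m + e) = residueCount (· < ·) b L n m := by
  have he : e < b := h.trans hd
  rw [residueCount_succ (r' := (· < ·)) hd he fun x y => by
    rw [← not_lt, mul_add_lt_mul_add_iff_lex he hd]; omega, if_neg h.not_ge, add_zero]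

lemma residueCount_le_succ_of_le (he : e < b) (h : d ≤ e) :
    residueCount (· ≤ ·) b (L + 1) (b * n + d) (b * m + e) =
      residueCount (· ≤ ·) b L n m + 1 := by
  have hd : d < b := h.trans_lt he
  rw [residueCount_succ (r' := (· ≤ ·)) hd he fun x y => by
    rw [← not_lt, mul_add_lt_mul_add_iff_lex he hd]; omega, if_pos h]

end ResidueComparison

section BorrowPolynomials

lemma sum_range_mul_add_of_blocks {M : Type*} [AddCommMonoid M] {F f g : ℕ → M} {b k : ℕ}
    (hk : k ≤ b) (hf : ∀ m, ∀ r < k, F (b * m + r) = f m)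
    (hg : ∀ m r, k ≤ r → r < b → F (b * m + r) = g m) (n : ℕ) :
    ∑ i ∈ range (b * n + k), F i =
      k • ∑ m ∈ range (n + 1), f m + (b - k) • ∑ m ∈ range n, g m := by
  have sum_low (m : ℕ) : ∑ r ∈ range k, F (b * m + r) = k • f m := by
    rw [sum_congr rfl fun r hr => hf m r (mem_range.1 hr), sum_const, card_range]
  have sum_high (m : ℕ) : ∑ r ∈ range (b - k), F (b * m + k + r) = (b - k) • g m := by
    rw [sum_congr rfl fun r hr => by
      rw [add_assoc, hg m (k + r) (by omega) (by have := mem_range.1 hr; omega)],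
      sum_const, card_range]
  induction n with
  | zero => simpa using sum_low 0
  | succ n ih =>
    have block_end : b * n + k + (b - k) = b * (n + 1) := by
      rw [mul_add_one]
      omega
    rw [← block_end, sum_range_add, sum_range_add, sum_high, ih, block_end, sum_low,
      sum_range_succ f (n + 1), sum_range_succ g n, smul_add, smul_add]
    abel

/-- The generating polynomial of the number of borrows in `n - m` over `0 ≤ m ≤ n`, looking at
`L` digits in base `b`. -/
noncomputable def borrowPoly (b L n : ℕ) : ℚ[X] :=
  ∑ m ∈ range (n + 1), X ^ residueCount (· < ·) b L n m

/-- The generating polynomial of the number of borrows in `n - m - 1` over `0 ≤ m < n`, where the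
extra `1` is a borrow coming in at the units place, looking at `L` digits in base `b`. -/
noncomputable def incomingBorrowPoly (b L n : ℕ) : ℚ[X] :=
  ∑ m ∈ range n, X ^ residueCount (· ≤ ·) b L n m

variable {b d : ℕ}

lemma borrowPoly_succ (hd : d < b) (L n : ℕ) :
    borrowPoly b (L + 1) (b * n + d) =
      C ((d : ℚ) + 1) * borrowPoly b L n +
        C ((b : ℚ) - d - 1) * X * incomingBorrowPoly b L n := by
  have blocks := sum_range_mul_add_of_blocks (F := fun m =>
      (X : ℚ[X]) ^ residueCount (· < ·) b (L + 1) (b * n + d) m) (Nat.succ_le_of_lt hd)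
    (fun m r hr => by rw [residueCount_lt_succ_of_le L n m hd (Nat.le_of_lt_succ hr)])
    (fun m r hr hrb => by rw [residueCount_lt_succ_of_lt L n m hrb hr]) n
  rw [borrowPoly, add_assoc, blocks]
  simp only [borrowPoly, incomingBorrowPoly, pow_succ, ← sum_mul, nsmul_eq_mul,
    Nat.cast_sub (Nat.succ_le_of_lt hd), Nat.cast_succ, map_add, map_sub, map_natCast, map_one]
  ring

lemma incomingBorrowPoly_succ (hd : d < b) (L n : ℕ) :
    incomingBorrowPoly b (L + 1) (b * n + d) =
      C (d : ℚ) * borrowPoly b L n + C ((b : ℚ) - d) * X * incomingBorrowPoly b L n := by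
  have blocks := sum_range_mul_add_of_blocks (F := fun m =>
      (X : ℚ[X]) ^ residueCount (· ≤ ·) b (L + 1) (b * n + d) m) hd.le
    (fun m r hr => by rw [residueCount_le_succ_of_lt L n m hd hr])
    (fun m r hr hrb => by rw [residueCount_le_succ_of_le L n m hrb hr]) n
  rw [incomingBorrowPoly, blocks]
  simp only [borrowPoly, incomingBorrowPoly, pow_succ, ← sum_mul, nsmul_eq_mul,
    Nat.cast_sub hd.le, map_sub, map_natCast]
  ring

lemma borrowA_eq_coeff_borrowPoly (b n β : ℕ) :
    (borrowA b n β : ℚ) = (borrowPoly b (Nat.digits b n).length n).coeff β := by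
  simp only [borrowA, borrowPoly, card_filter, finsetSum_coeff, coeff_X_pow, Nat.cast_sum,
    Nat.cast_ite, Nat.cast_one, Nat.cast_zero, eq_comm (a := β)]
  rfl

end BorrowPolynomials

section DigitExpansion

/-- The number with base-`b` digits `d 0, …, d (L - 1)`, most significant digit first. -/
def prefixValue (b : ℕ) (d : ℕ → ℕ) : ℕ → ℕ
  | 0 => 0
  | L + 1 => b * prefixValue b d L + d L

lemma prefixValue_getD (b : ℕ) (W : List ℕ) {L : ℕ} (hL : L ≤ W.length) :
    prefixValue b (W.getD · 0) L = Nat.ofDigits b (W.take L).reverse := by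
  induction L with
  | zero => rfl
  | succ L ih =>
    rw [prefixValue, ih (by omega), List.take_add_one, List.getElem?_eq_getElem hL,
      List.getD_eq_getElem _ _ hL, Option.toList_some, List.reverse_append,
      List.reverse_singleton, List.singleton_append, Nat.ofDigits_cons, add_comm]

lemma prefixValue_wordOf (b n : ℕ) :
    prefixValue b ((wordOf b n).getD · 0) (wordOf b n).length = n := by
  rw [prefixValue_getD b _ le_rfl, List.take_length, wordOf, List.reverse_reverse,
    Nat.ofDigits_digits]

lemma wordOf_getD_lt {b : ℕ} (hb : 1 < b) (n i : ℕ) : (wordOf b n).getD i 0 < b := by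
  rcases lt_or_ge i (wordOf b n).length with hi | hi
  · rw [List.getD_eq_getElem _ _ hi]
    exact Nat.digits_lt_base hb (List.mem_reverse.1 (List.getElem_mem hi))
  · rw [List.getD_eq_default _ _ hi]
    omega

/-- The factor of the first letter `d` of a word `w` in `c(w)`. -/
def firstFactor (d : ℕ) : ℚ := d / (d + 1)

/-- The factor of a letter `d` of a word `w` in `c(w)` that is neither first nor last. -/
def innerFactor (b d : ℕ) : ℚ := (b - d) / (d + 1)

/-- The factor of the last letter `d` of a word `w` in `c(w)`. -/
def lastFactor (b d : ℕ) : ℚ := (b - d - 1) / (d + 1)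

lemma cword_take_drop_s1 (b : ℕ) {W : List ℕ} {s k : ℕ} (hk : 0 < k) (hsk : s + k ≤ W.length) :
    cword b ((W.drop s).take k) =
      excursionWeight (fun i => firstFactor (W.getD i 0)) (fun i => innerFactor b (W.getD i 0))
        (fun i => lastFactor b (W.getD i 0)) (s, k) := by
  have length_eq : ((W.drop s).take k).length = k := by
    rw [List.length_take, List.length_drop]
    omega
  have getD_eq {h : ℕ} (hh : h < k) : ((W.drop s).take k).getD h 0 = W.getD (s + h) 0 := by
    simp [List.getD_eq_getElem?_getD, hh]
  rw [cword, length_eq, getD_eq hk, getD_eq (Nat.sub_one_lt_of_lt hk), excursionWeight]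
  dsimp only
  rw [add_zero, Nat.add_sub_assoc hk, add_comm s 1, add_comm s (k - 1), ← prod_Ico_add]
  refine congrArg (_ * · * _) (prod_congr rfl fun h hh => ?_)
  rw [getD_eq (by have := mem_Ico.1 hh; omega), innerFactor]

/-- The generating function weight of an excursion, for the digit string `d`: every digit but the
first contributes a borrow. -/
noncomputable def borrowExcursionWeight (b : ℕ) (d : ℕ → ℕ) : ℕ × ℕ → ℚ[X] :=
  excursionWeight (fun i => C (firstFactor (d i))) (fun i => C (innerFactor b (d i)) * X)
    (fun i => C (lastFactor b (d i)) * X)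

theorem borrowPoly_prefixValue {b : ℕ} {d : ℕ → ℕ} (hd : ∀ i, d i < b) (L : ℕ) :
    borrowPoly b L (prefixValue b d L) =
      C (∏ i ∈ range L, ((d i : ℚ) + 1)) * nonoverlapGF (borrowExcursionWeight b d) L := by
  have cancel (i : ℕ) (x : ℚ) : C ((d i : ℚ) + 1) * C (x / (d i + 1)) = C x := by
    rw [← C_mul, mul_div_cancel₀ x (by positivity)]
  rw [map_prod]
  refine twoState_eq_prod_mul_nonoverlapGF (A := fun L => borrowPoly b L (prefixValue b d L))
    (B := fun L => incomingBorrowPoly b L (prefixValue b d L)) ?_ ?_ (fun L => ?_) (fun L => ?_) L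
  · simp [borrowPoly, prefixValue, residueCount]
  · simp [incomingBorrowPoly, prefixValue]
  · rw [prefixValue, borrowPoly_succ (hd L), mul_add, ← mul_assoc, ← mul_assoc, lastFactor,
      cancel]
  · rw [prefixValue, incomingBorrowPoly_succ (hd L), mul_add, ← mul_assoc, ← mul_assoc,
      ← mul_assoc, firstFactor, innerFactor, cancel, cancel]

end DigitExpansion

section Coefficients

/-- The sum of `c(v) c(w) ⋯ c(z)` over the nonoverlapping families of subwords of `W`, all of length
at least `2`, for which total length minus number of subwords is `β`. -/
def excessSum (b : ℕ) (W : List ℕ) (β : ℕ) : ℚ :=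
  ∑ S ∈ nonoverlapFamilies W.length with ∑ q ∈ S, (q.2 - 1) = β,
    ∏ q ∈ S, cword b ((W.drop q.1).take q.2)

lemma coeff_nonoverlapGF_borrowExcursionWeight (b : ℕ) (W : List ℕ) (β : ℕ) :
    (nonoverlapGF (borrowExcursionWeight b (W.getD · 0)) W.length).coeff β = excessSum b W β := by
  rw [nonoverlapGF, finsetSum_coeff, excessSum, sum_filter]
  refine sum_congr rfl fun S hS => ?_
  have weight_eq : ∀ q ∈ S, borrowExcursionWeight b (W.getD · 0) q =
      C (cword b ((W.drop q.1).take q.2)) * X ^ (q.2 - 1) := by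
    intro q hq
    obtain ⟨two_le, le_length⟩ := (mem_nonoverlapFamilies.1 hS).1 q hq
    rw [cword_take_drop_s1 b (by omega) le_length]
    exact excursionWeight_C_mul_X _ _ _ _ two_le
  rw [prod_congr rfl weight_eq, prod_mul_distrib, prod_pow_eq_pow_sum, ← map_prod, coeff_C_mul,
    coeff_X_pow, mul_ite, mul_one, mul_zero]
  simp only [eq_comm (a := β)]

lemma borrowA_eq_prod_mul_excessSum {b : ℕ} (hb : 1 < b) (n β : ℕ) :
    (borrowA b n β : ℚ) =
      (∏ i ∈ range (wordOf b n).length, (((wordOf b n).getD i 0 : ℚ) + 1)) *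
        excessSum b (wordOf b n) β := by
  have expansion := borrowPoly_prefixValue (wordOf_getD_lt hb n) (wordOf b n).length
  have length_eq : (Nat.digits b n).length = (wordOf b n).length := List.length_reverse.symm
  rw [prefixValue_wordOf] at expansion
  rw [borrowA_eq_coeff_borrowPoly, length_eq, expansion, coeff_C_mul,
    coeff_nonoverlapGF_borrowExcursionWeight]

lemma sum_sub_one_add_card {ι : Type*} {S : Finset ι} {f : ι → ℕ} (h : ∀ i ∈ S, 1 ≤ f i) :
    ∑ i ∈ S, (f i - 1) + #S = ∑ i ∈ S, f i := by
  rw [card_eq_sum_ones, ← sum_add_distrib]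
  exact sum_congr rfl fun i hi => Nat.sub_add_cancel (h i hi)

lemma card_le_sum_sub_one {ι : Type*} {S : Finset ι} {f : ι → ℕ} (h : ∀ i ∈ S, 2 ≤ f i) :
    #S ≤ ∑ i ∈ S, (f i - 1) := by
  simpa using card_nsmul_le_sum S _ 1 fun i hi => Nat.le_sub_one_of_lt (h i hi)

lemma excessSum_zero (b : ℕ) (W : List ℕ) : excessSum b W 0 = 1 := by
  have families_eq : {S ∈ nonoverlapFamilies W.length | ∑ q ∈ S, (q.2 - 1) = 0} = {∅} := by
    ext S
    simp only [mem_filter, mem_nonoverlapFamilies, mem_singleton]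
    constructor
    · rintro ⟨⟨bounds, -⟩, excess⟩
      have := card_le_sum_sub_one fun q hq => (bounds q hq).1
      rw [← card_eq_zero]
      omega
    · rintro rfl
      simp
  rw [excessSum, families_eq, sum_singleton, prod_empty]

lemma nonoverlapSum_eq_sum_nonoverlapFamilies (b : ℕ) (W : List ℕ) {P : Multiset ℕ}
    (hP : ∀ x ∈ P, 2 ≤ x) :
    nonoverlapSum b W P =
      ∑ S ∈ nonoverlapFamilies W.length with S.val.map Prod.snd = P,
        ∏ q ∈ S, cword b ((W.drop q.1).take q.2) := by
  refine sum_congr (ext fun S => ?_) fun _ _ => rfl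
  simp only [mem_filter, mem_nonoverlapFamilies, mem_powerset, subset_iff, mem_product, mem_range,
    mem_Icc]
  constructor
  · rintro ⟨-, rfl, le_length, disj⟩
    exact ⟨⟨fun q hq => ⟨hP _ (Multiset.mem_map_of_mem _ hq), le_length q hq⟩, disj⟩, rfl⟩
  · rintro ⟨⟨bounds, disj⟩, lengths⟩
    refine ⟨fun q hq => ?_, lengths, fun q hq => (bounds q hq).2, disj⟩
    have := bounds q hq
    omega

lemma sum_partitions_sum_fiber {ι M : Type*} [AddCommMonoid M] {F : Finset ι}
    {lengths : ι → Multiset ℕ} (hF : ∀ S ∈ F, ∀ x ∈ lengths S, 2 ≤ x) (f : ι → M) (β : ℕ) :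
    ∑ γ ∈ Icc β (2 * β), ∑ P : Nat.Partition γ with
        Multiset.card P.parts = γ - β ∧ ∀ x ∈ P.parts, 2 ≤ x,
          ∑ S ∈ F with lengths S = P.parts, f S =
      ∑ S ∈ F with (lengths S).sum = Multiset.card (lengths S) + β, f S := by
  simp only [sum_sigma']
  refine sum_bij (fun x _ => x.2.2) ?_ ?_ ?_ fun _ _ => rfl
  · rintro ⟨γ, P, S⟩ h
    simp only [mem_sigma, mem_filter, mem_Icc, mem_univ, true_and] at h ⊢
    obtain ⟨⟨β_le, -⟩, ⟨card_parts, -⟩, hS, lengths_eq⟩ := h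
    rw [lengths_eq, card_parts, P.parts_sum]
    exact ⟨hS, (Nat.sub_add_cancel β_le).symm⟩
  · rintro ⟨γ, P, S⟩ h ⟨γ', P', S'⟩ h' rfl
    simp only [mem_sigma, mem_filter] at h h'
    have parts_eq : P.parts = P'.parts := h.2.2.2.symm.trans h'.2.2.2
    obtain rfl : γ = γ' := by rw [← P.parts_sum, ← P'.parts_sum, parts_eq]
    rw [Nat.Partition.ext parts_eq]
  · intro S hS
    obtain ⟨hS, sum_eq⟩ := mem_filter.1 hS
    have card_mul_two_le : Multiset.card (lengths S) * 2 ≤ (lengths S).sum :=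
      Multiset.card_nsmul_le_sum (hF S hS)
    refine ⟨⟨(lengths S).sum, ⟨lengths S, fun hx => two_pos.trans_le (hF S hS _ hx), rfl⟩, S⟩,
      ?_, rfl⟩
    simp only [mem_sigma, mem_filter, mem_Icc, mem_univ, true_and]
    exact ⟨⟨by omega, by omega⟩, ⟨by omega, hF S hS⟩, hS, trivial⟩

lemma sum_partitions_nonoverlapSum (b : ℕ) (W : List ℕ) (β : ℕ) :
    ∑ γ ∈ Icc β (2 * β), ∑ P : Nat.Partition γ with
        Multiset.card P.parts = γ - β ∧ ∀ x ∈ P.parts, 2 ≤ x, nonoverlapSum b W P.parts =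
      excessSum b W β := by
  have two_le : ∀ S ∈ nonoverlapFamilies W.length, ∀ q ∈ S, 2 ≤ q.2 :=
    fun S hS q hq => ((mem_nonoverlapFamilies.1 hS).1 q hq).1
  rw [sum_congr rfl fun γ _ => sum_congr rfl fun P hP =>
    nonoverlapSum_eq_sum_nonoverlapFamilies b W (mem_filter.1 hP).2.2,
    sum_partitions_sum_fiber fun S hS => Multiset.forall_mem_map_iff.2 (two_le S hS), excessSum]
  refine sum_congr (filter_congr fun S hS => ?_) fun _ _ => rfl
  have excess_add_card := sum_sub_one_add_card fun q hq => one_le_two.trans (two_le S hS q hq)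
  rw [Multiset.card_map, card_val, sum_map_val, ← excess_add_card]
  omega

end Coefficients

/-- **Proposition.** For `b ≥ 2`, `β ≥ 0` and `n ≥ 0` with base-`b` digits `n_l ⋯ n_0`,
`A_n(β) = A_n(0) · Σ_{γ=β}^{2β} Σ_{P ∈ S(γ, γ−β)} Σ_{nonoverlapping subwords} c(v)⋯c(z)`,
where `S(γ,δ)` is the set of partitions of `γ` into exactly `δ` parts, all parts at least 2. -/
theorem stmt1 (b : ℕ) (hb : 2 ≤ b) (β n : ℕ) :
    (borrowA b n β : ℚ) =
      (borrowA b n 0 : ℚ) *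
        ∑ γ ∈ Finset.Icc β (2 * β),
          ∑ P ∈ Finset.univ.filter (fun P : Nat.Partition γ =>
              Multiset.card P.parts = γ - β ∧ ∀ x ∈ P.parts, 2 ≤ x),
            nonoverlapSum b (wordOf b n) P.parts := by
  rw [sum_partitions_nonoverlapSum, borrowA_eq_prod_mul_excessSum hb n β,
    borrowA_eq_prod_mul_excessSum hb n 0, excessSum_zero, mul_one]
end

section
/- Let p be a prime and let n ≥ 0 with standard base-p digits n_l n_{l−1} ⋯ n_0. Then the number of nonzero entries on row n of Pascal's triangle modulo p^2 satisfies a_{p^2}(n) = (∏_{i=0}^{l} (n_i + 1)) · (1 + Σ_{i=0}^{l−1} (n_{i+1}/(n_{i+1}+1)) · ((p − n_i − 1)/(n_i + 1))), the equality read in the rational numbers. -/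
/-!
Write `a_k` for `rowCount k` and let `d, e < p`. By Legendre's formula, subtracting the last digit
of `p m + e` from that of `p n + d` either causes no borrow (`e ≤ d`), and then `C(pn+d, pm+e)` has
the `p`-adic valuation of `C(n, m)`, or it causes one (`d < e`), and then `C(pn+d, pm+e)` has the
valuation of `p · n · C(n-1, m)`. Counting the entries of each kind gives
`a_{p^(k+1)}(pn+d) = (d+1) a_{p^(k+1)}(n) + (p-d-1) a_{p^k / gcd(p^k, n)}(n-1)`.
For `k = 0` the last term vanishes, since `a_1 = 0`, and `a_p(n)` is the product of the `n_i + 1`.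
For `k = 1` and `n = p n' + e` the last count is `e · a_p(n')`, that is, `e / (e+1)` times `a_p(n)`;
this produces the summands of the correction factor.
-/

section Count

variable {P Q R : ℕ → Prop} [DecidablePred P] [DecidablePred Q] [DecidablePred R]

lemma count_add_of_forall_iff {C : Prop} [Decidable C] {a t : ℕ}
    (h : ∀ e < t, (P (a + e) ↔ C)) :
    Nat.count P (a + t) = Nat.count P a + t * if C then 1 else 0 := by
  rw [Nat.count_add, Nat.add_left_cancel_iff]
  split_ifs with hC
  · rw [mul_one, Nat.count_iff_forall]
    exact fun e he => (h e he).2 hC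
  · rw [mul_zero, Nat.count_iff_forall_not]
    exact fun e he hP => hC ((h e he).1 hP)

lemma count_mul_of_forall_iff {b t : ℕ} (ht : t ≤ b)
    (hQ : ∀ m, ∀ e < t, (P (b * m + e) ↔ Q m))
    (hR : ∀ m e, t ≤ e → e < b → (P (b * m + e) ↔ R m)) (N : ℕ) :
    Nat.count P (b * N) = t * Nat.count Q N + (b - t) * Nat.count R N := by
  induction N with
  | zero => simp
  | succ N ih =>
    have split_block : b * (N + 1) = b * N + t + (b - t) := by rw [mul_add_one]; omega
    have hR' : ∀ e < b - t, (P (b * N + t + e) ↔ R N) := fun e he => by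
      rw [add_assoc]
      exact hR N (t + e) (by omega) (by omega)
    rw [split_block, count_add_of_forall_iff hR', count_add_of_forall_iff (hQ N), ih,
      Nat.count_succ, Nat.count_succ]
    ring

end Count

section RowCount

lemma rowCount_eq_count (k : ℕ) {n N : ℕ} (hN : n < N) :
    rowCount k n = Nat.count (fun m => ¬ k ∣ n.choose m) N := by
  rw [rowCount, Nat.count_eq_card_filter_range]
  congr 1
  ext m
  simp only [Finset.mem_filter, Finset.mem_range, and_congr_left_iff]
  intro hm
  have hmn : m ≤ n := by
    by_contra! hnm
    exact hm (Nat.choose_eq_zero_of_lt hnm ▸ dvd_zero k)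
  omega

lemma rowCount_one (n : ℕ) : rowCount 1 n = 0 := by
  simp [rowCount]

lemma rowCount_zero {k : ℕ} (hk : k ≠ 1) : rowCount k 0 = 1 := by
  simp [rowCount, Finset.filter_singleton, hk]

end RowCount

lemma div_gcd_dvd_iff_dvd_mul {k : ℕ} (hk : 0 < k) (a b : ℕ) :
    k / k.gcd a ∣ b ↔ k ∣ a * b := by
  rw [Nat.div_dvd_iff_dvd_mul (Nat.gcd_dvd_left k a) (Nat.gcd_pos_of_pos_left a hk),
    Nat.dvd_gcd_mul_iff_dvd_mul]

section Valuation

variable {p : ℕ} [Fact p.Prime]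

lemma padicValNat_factorial_mul_add_eq (n : ℕ) {d : ℕ} (hd : d < p) :
    padicValNat p (p * n + d).factorial = n + padicValNat p n.factorial := by
  rw [padicValNat_factorial_mul_add n hd, padicValNat_factorial_mul, add_comm]

lemma padicValNat_add_choose_add_factorials (a b : ℕ) :
    padicValNat p ((a + b).choose a) + padicValNat p a.factorial + padicValNat p b.factorial =
      padicValNat p (a + b).factorial := by
  have hchoose : (a + b).choose a ≠ 0 := Nat.choose_ne_zero (Nat.le_add_right a b)
  rw [← Nat.add_choose_mul_factorial_mul_factorial, ← Nat.choose_symm_add,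
    padicValNat.mul (mul_ne_zero hchoose a.factorial_ne_zero) b.factorial_ne_zero,
    padicValNat.mul hchoose a.factorial_ne_zero]

lemma padicValNat_choose_mul_add_of_le {n m d e : ℕ} (hmn : m ≤ n) (hed : e ≤ d) (hd : d < p) :
    padicValNat p ((p * n + d).choose (p * m + e)) = padicValNat p (n.choose m) := by
  obtain ⟨c, rfl⟩ := Nat.exists_eq_add_of_le hmn
  obtain ⟨f, rfl⟩ := Nat.exists_eq_add_of_le hed
  have hsum : p * (m + c) + (e + f) = (p * m + e) + (p * c + f) := by ring
  have hlarge := padicValNat_add_choose_add_factorials (p := p) (p * m + e) (p * c + f)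
  have hsmall := padicValNat_add_choose_add_factorials (p := p) m c
  rw [← hsum, padicValNat_factorial_mul_add_eq _ hd, padicValNat_factorial_mul_add_eq m (by omega),
    padicValNat_factorial_mul_add_eq c (by omega)] at hlarge
  omega

lemma padicValNat_choose_mul_add_of_lt {n m d e : ℕ} (hmn : m ≤ n) (hde : d < e) (he : e < p) :
    padicValNat p ((p * (n + 1) + d).choose (p * m + e)) =
      padicValNat p ((n + 1) * n.choose m) + 1 := by
  obtain ⟨c, rfl⟩ := Nat.exists_eq_add_of_le hmn
  obtain ⟨f, hf⟩ : ∃ f, p + d = e + f := Nat.exists_eq_add_of_le (by omega)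
  have hsum : p * (m + c + 1) + d = (p * m + e) + (p * c + f) := by linear_combination hf
  have hlarge := padicValNat_add_choose_add_factorials (p := p) (p * m + e) (p * c + f)
  have hsmall := padicValNat_add_choose_add_factorials (p := p) m c
  rw [← hsum, padicValNat_factorial_mul_add_eq _ (hde.trans he),
    padicValNat_factorial_mul_add_eq m he, padicValNat_factorial_mul_add_eq c (by omega),
    Nat.factorial_succ, padicValNat.mul (by omega) (Nat.factorial_ne_zero _)] at hlarge
  rw [padicValNat.mul (by omega) (Nat.choose_ne_zero hmn)]
  omega

lemma prime_pow_dvd_choose_mul_add_iff_of_le (k n m : ℕ) {d e : ℕ} (hed : e ≤ d) (hd : d < p) :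
    p ^ k ∣ (p * n + d).choose (p * m + e) ↔ p ^ k ∣ n.choose m := by
  rcases lt_or_ge n m with hnm | hmn
  · have hlt : p * n + d < p * m + e := by nlinarith
    rw [Nat.choose_eq_zero_of_lt hnm, Nat.choose_eq_zero_of_lt hlt]
  · have hle : p * m + e ≤ p * n + d := by gcongr
    rw [padicValNat_dvd_iff_le (Nat.choose_ne_zero hle),
      padicValNat_dvd_iff_le (Nat.choose_ne_zero hmn), padicValNat_choose_mul_add_of_le hmn hed hd]

-- For `n = 0` the truncated `n - 1` is harmless: both sides of the equivalence hold.
lemma prime_pow_succ_dvd_choose_mul_add_iff_of_lt (k n m : ℕ) {d e : ℕ} (hde : d < e)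
    (he : e < p) :
    p ^ (k + 1) ∣ (p * n + d).choose (p * m + e) ↔ p ^ k ∣ n * (n - 1).choose m := by
  rcases le_or_gt n m with hnm | hmn
  · have hlt : p * n + d < p * m + e := add_lt_add_of_le_of_lt (Nat.mul_le_mul_left p hnm) hde
    have hzero : n * (n - 1).choose m = 0 := by
      rcases n with _ | n
      · exact zero_mul _
      · rw [Nat.choose_eq_zero_of_lt (by omega), mul_zero]
    rw [Nat.choose_eq_zero_of_lt hlt, hzero]
    simp only [dvd_zero]
  · obtain ⟨n, rfl⟩ : ∃ n', n = n' + 1 := Nat.exists_eq_add_one.2 (Nat.zero_lt_of_lt hmn)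
    have hmn : m ≤ n := Nat.le_of_lt_succ hmn
    have hle : p * m + e ≤ p * (n + 1) + d := by nlinarith
    have hprod : (n + 1) * n.choose m ≠ 0 := mul_ne_zero n.succ_ne_zero (Nat.choose_ne_zero hmn)
    rw [Nat.add_sub_cancel, padicValNat_dvd_iff_le (Nat.choose_ne_zero hle),
      padicValNat_dvd_iff_le hprod, padicValNat_choose_mul_add_of_lt hmn hde he,
      Nat.add_le_add_iff_right]

end Valuation

section Recurrence

variable {p : ℕ} [hp : Fact p.Prime]

-- At `n = 0` the modulus `p ^ k / gcd (p ^ k) 0` is `1`, so the count on row `0 - 1 = 0` vanishes.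
theorem rowCount_prime_pow_succ_mul_add (k n : ℕ) {d : ℕ} (hd : d < p) :
    rowCount (p ^ (k + 1)) (p * n + d) =
      (d + 1) * rowCount (p ^ (k + 1)) n +
        (p - (d + 1)) * rowCount (p ^ k / (p ^ k).gcd n) (n - 1) := by
  have hrow : p * n + d < p * (n + 1) := by rw [mul_add_one]; omega
  rw [rowCount_eq_count _ hrow, rowCount_eq_count _ (Nat.lt_add_one n),
    rowCount_eq_count _ (show n - 1 < n + 1 by omega)]
  refine count_mul_of_forall_iff hd (fun m e he => ?_) (fun m e hde he => ?_) (n + 1)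
  · rw [prime_pow_dvd_choose_mul_add_iff_of_le _ n m (Nat.le_of_lt_succ he) hd]
  · rw [prime_pow_succ_dvd_choose_mul_add_iff_of_lt k n m hde he,
      div_gcd_dvd_iff_dvd_mul (pow_pos hp.out.pos k)]

theorem rowCount_prime_mul_add (n : ℕ) {d : ℕ} (hd : d < p) :
    rowCount p (p * n + d) = (d + 1) * rowCount p n := by
  simpa [rowCount_one] using rowCount_prime_pow_succ_mul_add 0 n hd

lemma rowCount_div_gcd_pred_mul_add (n : ℕ) {e : ℕ} (he : e < p) :
    rowCount (p / p.gcd (p * n + e)) (p * n + e - 1) = e * rowCount p n := by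
  rcases e with _ | e
  · rw [add_zero, Nat.gcd_mul_right_right, Nat.div_self hp.out.pos, rowCount_one, zero_mul]
  · have hcoprime : p.gcd (p * n + (e + 1)) = 1 := by
      rw [Nat.gcd_mul_left_add_right]
      exact Nat.coprime_of_lt_prime e.succ_ne_zero he hp.out
    rw [hcoprime, Nat.div_one, ← add_assoc, Nat.add_sub_cancel,
      rowCount_prime_mul_add n (Nat.lt_of_succ_lt he)]

theorem rowCount_prime_sq_mul_mul_add_add (n : ℕ) {d e : ℕ} (hd : d < p) (he : e < p) :
    rowCount (p ^ 2) (p * (p * n + e) + d) =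
      (d + 1) * rowCount (p ^ 2) (p * n + e) + (p - (d + 1)) * (e * rowCount p n) := by
  simpa only [pow_one, rowCount_div_gcd_pred_mul_add n he] using
    rowCount_prime_pow_succ_mul_add 1 (p * n + e) hd

end Recurrence

/-- The product of the `n_i + 1` over the letters of `L`, a list of digits with the least
significant one first; it is the number of nonzero entries on a row of Pascal's triangle mod `p`. -/
def digitProd (L : List ℕ) : ℚ :=
  ∏ i ∈ Finset.range L.length, ((L.getD i 0 : ℚ) + 1)

/-- The sum, over the pairs of adjacent digits of `L` (least significant first), of the ratio
between the number of `m` whose only borrow is at that pair and the number of `m` without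
borrows. -/
def singleBorrowSum (p : ℕ) (L : List ℕ) : ℚ :=
  ∑ i ∈ Finset.range (L.length - 1),
    ((L.getD (i + 1) 0 : ℚ) / ((L.getD (i + 1) 0 : ℚ) + 1)) *
      (((p : ℚ) - (L.getD i 0 : ℚ) - 1) / ((L.getD i 0 : ℚ) + 1))

section DigitSums

lemma digitProd_nil : digitProd [] = 1 := Finset.prod_range_zero _

lemma digitProd_cons (d : ℕ) (L : List ℕ) : digitProd (d :: L) = (d + 1) * digitProd L := by
  simp only [digitProd, List.length_cons, Finset.prod_range_succ', List.getD_cons_succ,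
    List.getD_cons_zero, mul_comm]

lemma singleBorrowSum_nil (p : ℕ) : singleBorrowSum p [] = 0 := Finset.sum_range_zero _

lemma singleBorrowSum_singleton (p d : ℕ) : singleBorrowSum p [d] = 0 := Finset.sum_range_zero _

lemma singleBorrowSum_cons_cons (p d e : ℕ) (L : List ℕ) :
    singleBorrowSum p (d :: e :: L) =
      singleBorrowSum p (e :: L) + (e / (e + 1)) * ((p - d - 1) / (d + 1)) := by
  simp only [singleBorrowSum, List.length_cons, Nat.add_sub_cancel, Finset.sum_range_succ',
    List.getD_cons_succ, List.getD_cons_zero]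

lemma digitProd_mul_one_add_singleBorrowSum_cons_cons (p d e : ℕ) (L : List ℕ) :
    digitProd (d :: e :: L) * (1 + singleBorrowSum p (d :: e :: L)) =
      (d + 1) * (digitProd (e :: L) * (1 + singleBorrowSum p (e :: L))) +
        (p - (d + 1)) * (e * digitProd L) := by
  rw [digitProd_cons, digitProd_cons, singleBorrowSum_cons_cons]
  field_simp
  ring

end DigitSums

lemma ofDigits_cons_eq_mul_add (b d : ℕ) (L : List ℕ) :
    Nat.ofDigits b (d :: L) = b * Nat.ofDigits b L + d := by
  rw [Nat.ofDigits_cons, add_comm]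

section ClosedForm

variable {p : ℕ} [hp : Fact p.Prime]

theorem rowCount_prime_ofDigits (L : List ℕ) (hL : ∀ d ∈ L, d < p) :
    (rowCount p (Nat.ofDigits p L) : ℚ) = digitProd L := by
  induction L with
  | nil => rw [Nat.ofDigits_nil, rowCount_zero hp.out.ne_one, Nat.cast_one, digitProd_nil]
  | cons d L ih =>
    obtain ⟨hd, hL⟩ := List.forall_mem_cons.1 hL
    rw [ofDigits_cons_eq_mul_add, rowCount_prime_mul_add _ hd, digitProd_cons, ← ih hL,
      Nat.cast_mul, Nat.cast_add_one]

theorem rowCount_prime_sq_ofDigits (L : List ℕ) (hL : ∀ d ∈ L, d < p) :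
    (rowCount (p ^ 2) (Nat.ofDigits p L) : ℚ) = digitProd L * (1 + singleBorrowSum p L) := by
  have rowCount_row_zero : rowCount (p ^ 2) 0 = 1 :=
    rowCount_zero (by simp [hp.out.ne_one])
  induction L with
  | nil => simp [rowCount_row_zero, digitProd_nil, singleBorrowSum_nil]
  | cons d L ih =>
    obtain ⟨hd, hL⟩ := List.forall_mem_cons.1 hL
    rcases L with _ | ⟨e, L⟩
    · have hrow := rowCount_prime_sq_mul_mul_add_add 0 hd hp.out.pos
      simp only [mul_zero, zero_mul, add_zero, zero_add, rowCount_row_zero, mul_one] at hrow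
      simp [hrow, digitProd_cons, digitProd_nil, singleBorrowSum_singleton]
    · obtain ⟨he, hL'⟩ := List.forall_mem_cons.1 hL
      rw [digitProd_mul_one_add_singleBorrowSum_cons_cons, ← ih hL,
        ← rowCount_prime_ofDigits L hL', ofDigits_cons_eq_mul_add, ofDigits_cons_eq_mul_add,
        rowCount_prime_sq_mul_mul_add_add _ hd he]
      simp only [Nat.cast_add, Nat.cast_mul, Nat.cast_sub hd, Nat.succ_eq_add_one,
        Nat.cast_one]

end ClosedForm

/-- **Corollary.** For a prime `p` and `n ≥ 0` with base-`p` digits `n_l ⋯ n_0`,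
`a_{p^2}(n) = (∏_{i=0}^{l} (n_i+1)) · (1 + Σ_{i=0}^{l−1} (n_{i+1}/(n_{i+1}+1))·((p−n_i−1)/(n_i+1)))`. -/
theorem stmt2 (p : ℕ) (hp : p.Prime) (n : ℕ) :
    (rowCount (p ^ 2) n : ℚ) =
      (∏ i ∈ Finset.range (Nat.digits p n).length,
          (((Nat.digits p n).getD i 0 : ℚ) + 1)) *
        (1 + ∑ i ∈ Finset.range ((Nat.digits p n).length - 1),
          (((Nat.digits p n).getD (i + 1) 0 : ℚ) / (((Nat.digits p n).getD (i + 1) 0 : ℚ) + 1)) *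
            (((p : ℚ) - ((Nat.digits p n).getD i 0 : ℚ) - 1) /
              (((Nat.digits p n).getD i 0 : ℚ) + 1))) := by
  have : Fact p.Prime := ⟨hp⟩
  have hdigits := rowCount_prime_sq_ofDigits (p.digits n) fun _ => Nat.digits_lt_base hp.one_lt
  rwa [Nat.ofDigits_digits] at hdigits
end

section
/- Let p be a prime and let α ≥ 1. There exists a multivariate polynomial Q with rational coefficients, in variables X_w indexed by the nonempty words w of length at most α over the digit alphabet {0,1,…,p−1}, of total degree α − 1, such that for every n ≥ 0 one has a_{p^α}(n) = a_p(n) · Q((|n|_w)_w), the equality read in the rational numbers, where Q is evaluated by substituting |n|_w for X_w. -/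
/-!
By Kummer's theorem the `p`-adic valuation of `C(n, m)` is the number of borrows when `m` is
subtracted from `n` in base `p`. A two-state automaton (borrow pending or not) reads the digit word
of `n`; after normalization it produces a power series `A` with constant term `1` such that
`a_{p^α}(n) = a_p(n) * ∑_{β < α} [X^β] A`.

All transfer matrices of the automaton have determinant divisible by `X`, so the quotient of the
series of a word `d W` by that of `W` depends modulo `X^α` only on the first `α` letters of `d W`.
Hence `A` is modulo `X^α` a product, over the windows of length `α` of the digit word, of series `r`
with constant term `1`. The number of times that a given window occurs is a linear form in the
`|n|_w`, and the coefficient of `X^k` in `r^N` is a polynomial of degree at most `k` in `N`, which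
bounds the degree by `α - 1`.

The degree cannot be smaller: if the digit word of `n` is `10` repeated `N` times, then all `|n|_w`
are `O(N)`, whereas the coefficient of `X^(α-1)` in `A` grows like `N^(α-1)`.
-/

section Words

variable {γ : Type*}

theorem countP_tails_eq_card_filter_drop (P : List γ → Prop) [DecidablePred P] (W : List γ) :
    W.tails.countP (P ·) = ((Finset.range (W.length + 1)).filter fun s => P (W.drop s)).card := by
  rw [Finset.card_filter]
  induction W with
  | nil => simp [List.countP_cons]
  | cons d W ih =>
    rw [List.tails_cons, List.countP_cons, ih, List.length_cons, Finset.sum_range_succ' _ (_ + 1)]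
    simp

theorem subwordCount_eq_countP_tails (b n : ℕ) (w : List ℕ) :
    subwordCount b n w = (wordOf b n).tails.countP (w <+: ·) := by
  rw [countP_tails_eq_card_filter_drop, subwordCount]
  congr 1
  ext s
  simp only [Finset.mem_filter, Finset.mem_range, List.prefix_iff_eq_take, eq_comm (a := w)]
  refine ⟨fun ⟨_, h⟩ => ⟨by omega, h⟩, fun ⟨_, h⟩ => ⟨?_, h⟩⟩
  have hlen := congrArg List.length h
  rw [List.length_take, List.length_drop] at hlen
  omega

variable [DecidableEq γ]

theorem ite_prefix_eq_add_sum_snoc (S : Finset γ) {k : ℕ} {w T : List γ} (hw : w.length < k)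
    (hT : ∀ d ∈ T, d ∈ S) :
    (if w <+: T then 1 else 0) =
      (if T.take k = w then 1 else 0) + ∑ d ∈ S, if w ++ [d] <+: T then 1 else 0 := by
  by_cases hwT : w <+: T
  · obtain ⟨r, rfl⟩ := hwT
    cases r with
    | nil =>
      have prefix_false (d : γ) : ¬ w ++ [d] <+: w := fun h => by simpa using h.length_le
      simp [List.take_of_length_le hw.le, prefix_false]
    | cons e r =>
      have take_ne : (w ++ e :: r).take k ≠ w := fun h => by
        have := congrArg List.length h
        simp only [List.length_take, List.length_append, List.length_cons] at this
        omega
      simp [take_ne, List.prefix_append_right_inj, List.cons_prefix_cons, hT e (by simp)]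
  · have take_ne : T.take k ≠ w := fun h => hwT ⟨T.drop k, h ▸ List.take_append_drop k T⟩
    have prefix_false (d : γ) : ¬ w ++ [d] <+: T := fun h =>
      hwT ((List.prefix_append w [d]).trans h)
    simp [hwT, take_ne, prefix_false]

theorem countP_prefix_eq_add_sum_snoc (S : Finset γ) {k : ℕ} {w : List γ} (hw : w.length < k)
    (l : List (List γ)) (hl : ∀ T ∈ l, ∀ d ∈ T, d ∈ S) :
    l.countP (w <+: ·) =
      l.countP (List.take k · = w) + ∑ d ∈ S, l.countP (w ++ [d] <+: ·) := by
  induction l with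
  | nil => simp
  | cons T l ih =>
    have head := ite_prefix_eq_add_sum_snoc S hw (hl T (by simp))
    have tail := ih fun U hU => hl U (by simp [hU])
    simp only [List.countP_cons, decide_eq_true_eq, Finset.sum_add_distrib]
    omega

theorem prod_map_comp_eq_prod_pow_countP {β M : Type*} [CommMonoid M] {T : Finset γ} (f : γ → M)
    (g : β → γ) (l : List β) (hl : ∀ x ∈ l, g x ∈ T) :
    (l.map fun x => f (g x)).prod = ∏ y ∈ T, f y ^ l.countP (g · = y) := by
  induction l with
  | nil => simp
  | cons x l ih =>
    have tail := ih fun y hy => hl y (by simp [hy])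
    simp only [List.map_cons, List.prod_cons, List.countP_cons, pow_add, Finset.prod_mul_distrib,
      tail, decide_eq_true_eq]
    simp [pow_ite, hl x (by simp), mul_comm]

end Words

/-- The coefficients of a two-state automaton reading words over `γ`: the letter `d` acts by the
transfer matrix `!![1, a d; X * b d, X * c d]`, so that `X` marks the arrivals in the second
state. -/
structure TransferRule (γ R : Type*) where
  /-- The weight of a transition from the second state to the first. -/
  a : γ → R
  /-- The weight of a transition from the first state to the second. -/
  b : γ → R
  /-- The weight of staying in the second state. -/
  c : γ → R

namespace TransferRule

open PowerSeries

variable {γ : Type*}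

/-- The generating functions of the two states after reading a word from its last letter to its
first, starting in the first state. -/
noncomputable def pair {R : Type*} [CommSemiring R] (M : TransferRule γ R) :
    List γ → R⟦X⟧ × R⟦X⟧
  | [] => (1, 0)
  | d :: W =>
    ((M.pair W).1 + C (M.a d) * (M.pair W).2,
      X * (C (M.b d) * (M.pair W).1 + C (M.c d) * (M.pair W).2))

section CommSemiring

variable {R : Type*} [CommSemiring R] (M : TransferRule γ R)

theorem X_dvd_pair_snd (W : List γ) : X ∣ (M.pair W).2 := by
  cases W with
  | nil => exact dvd_zero X
  | cons d W => exact dvd_mul_right X _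

theorem constantCoeff_pair_fst (W : List γ) : constantCoeff (M.pair W).1 = 1 := by
  induction W with
  | nil => simp [pair]
  | cons d W ih =>
    have hsnd := X_dvd_iff.1 (M.X_dvd_pair_snd W)
    simp [pair, ih, hsnd]

end CommSemiring

section CommRing

variable {R : Type*} [CommRing R] (M : TransferRule γ R)

-- Each transfer matrix has determinant divisible by `X`, so every common letter contributes one
-- factor `X` to this determinant.
theorem X_pow_succ_dvd_det_pair_take (k : ℕ) (W : List γ) :
    X ^ (k + 1) ∣ (M.pair W).1 * (M.pair (W.take k)).2 -
      (M.pair W).2 * (M.pair (W.take k)).1 := by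
  induction k generalizing W with
  | zero => simpa [pair] using M.X_dvd_pair_snd W
  | succ k ih =>
    cases W with
    | nil => simp [pair]
    | cons d W =>
      obtain ⟨q, hq⟩ := ih W
      simp only [List.take_succ_cons, pair]
      exact ⟨(C (M.c d) - C (M.a d) * C (M.b d)) * q,
        by linear_combination (X * (C (M.c d) - C (M.a d) * C (M.b d))) * hq⟩

end CommRing

section Field

variable {K : Type*} [Field K]

/-- The factor by which the first letter of a word multiplies the first series of its
pair (`1` for the empty word). -/
noncomputable def ratio (M : TransferRule γ K) (w : List γ) : K⟦X⟧ :=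
  (M.pair w).1 * (M.pair w.tail).1⁻¹

variable (M : TransferRule γ K)

theorem constantCoeff_ratio (w : List γ) : constantCoeff (M.ratio w) = 1 := by
  simp [ratio, constantCoeff_pair_fst]

theorem ratio_nil : M.ratio [] = 1 :=
  PowerSeries.mul_inv_cancel _ (by simp [constantCoeff_pair_fst])

theorem X_pow_succ_dvd_pair_cons_sub (k : ℕ) (d : γ) (W : List γ) :
    X ^ (k + 1) ∣ (M.pair (d :: W)).1 - M.ratio (d :: W.take k) * (M.pair W).1 := by
  obtain ⟨q, hq⟩ := M.X_pow_succ_dvd_det_pair_take k W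
  have inv_cancel : (M.pair (W.take k)).1 * (M.pair (W.take k)).1⁻¹ = 1 :=
    PowerSeries.mul_inv_cancel _ (by simp [constantCoeff_pair_fst])
  refine ⟨-C (M.a d) * q * (M.pair (W.take k)).1⁻¹, ?_⟩
  simp only [ratio, pair, List.tail_cons]
  linear_combination
    (-((M.pair W).1 + C (M.a d) * (M.pair W).2)) * inv_cancel -
      C (M.a d) * (M.pair (W.take k)).1⁻¹ * hq

theorem X_pow_succ_dvd_pair_sub_prod_ratio (k : ℕ) (W : List γ) :
    X ^ (k + 1) ∣ (M.pair W).1 - (W.tails.map fun T => M.ratio (T.take (k + 1))).prod := by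
  induction W with
  | nil => simp [pair, ratio_nil]
  | cons d W ih =>
    rw [List.tails_cons, List.map_cons, List.prod_cons, List.take_succ_cons]
    have split := dvd_add (M.X_pow_succ_dvd_pair_cons_sub k d W)
      (ih.mul_left (M.ratio (d :: W.take k)))
    rwa [mul_sub, sub_add_sub_cancel] at split

theorem coeff_pair_fst_eq_coeff_prod_ratio_pow [DecidableEq γ] {T : Finset (List γ)} {k β : ℕ}
    (hβ : β ≤ k) {W : List γ} (hT : ∀ U ∈ W.tails, U.take (k + 1) ∈ T) :
    coeff β (M.pair W).1 =
      coeff β (∏ w ∈ T, M.ratio w ^ W.tails.countP (List.take (k + 1) · = w)) := by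
  rw [← prod_map_comp_eq_prod_pow_countP M.ratio (List.take (k + 1)) W.tails hT,
    ← sub_eq_zero, ← map_sub]
  exact X_pow_dvd_iff.1 (M.X_pow_succ_dvd_pair_sub_prod_ratio k W) β (Nat.lt_succ_of_le hβ)

end Field

section Ordered

variable {R : Type*} [CommRing R] [LinearOrder R] [IsStrictOrderedRing R] {M : TransferRule γ R}

theorem coeff_pair_nonneg (ha : 0 ≤ M.a) (hb : 0 ≤ M.b) (hc : 0 ≤ M.c) (W : List γ) (k : ℕ) :
    0 ≤ coeff k (M.pair W).1 ∧ 0 ≤ coeff k (M.pair W).2 := by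
  induction W generalizing k with
  | nil => constructor <;> simp [pair, coeff_one, apply_ite]
  | cons d W ih =>
    refine ⟨?_, ?_⟩
    · simpa [pair] using add_nonneg (ih k).1 (mul_nonneg (ha d) (ih k).2)
    · cases k with
      | zero => simp [pair]
      | succ k =>
        simpa [pair, coeff_succ_X_mul] using
          add_nonneg (mul_nonneg (hb d) (ih k).1) (mul_nonneg (hc d) (ih k).2)

-- Reading `e d` multiplies the first series by at least `1 + M.a e * M.b d * X`.
theorem pow_mul_choose_le_coeff_pair_flatten_replicate (ha : 0 ≤ M.a) (hb : 0 ≤ M.b)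
    (hc : 0 ≤ M.c) (e d : γ) (N k : ℕ) :
    (M.a e * M.b d) ^ k * N.choose k ≤
      coeff k (M.pair (List.replicate N [e, d]).flatten).1 := by
  induction N generalizing k with
  | zero => cases k <;> simp [pair, coeff_one]
  | succ N ih =>
    set W := (List.replicate N [e, d]).flatten
    have cons_cons : (List.replicate (N + 1) [e, d]).flatten = e :: d :: W := rfl
    have nonneg := coeff_pair_nonneg ha hb hc W
    cases k with
    | zero => simp [constantCoeff_pair_fst]
    | succ k =>
      have step : coeff (k + 1) (M.pair (e :: d :: W)).1 =
          coeff (k + 1) (M.pair W).1 + M.a e * M.b d * coeff k (M.pair W).1 +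
            (M.a d * coeff (k + 1) (M.pair W).2 + M.a e * M.c d * coeff k (M.pair W).2) := by
        simp only [pair, map_add, coeff_C_mul, coeff_succ_X_mul]
        ring
      have rest_nonneg : 0 ≤ M.a d * coeff (k + 1) (M.pair W).2 +
          M.a e * M.c d * coeff k (M.pair W).2 :=
        add_nonneg (mul_nonneg (ha d) (nonneg _).2)
          (mul_nonneg (mul_nonneg (ha e) (hc d)) (nonneg _).2)
      have prev := mul_le_mul_of_nonneg_left (ih k) (mul_nonneg (ha e) (hb d))
      rw [cons_cons, step, Nat.choose_succ_succ, Nat.cast_add]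
      linear_combination ih (k + 1) + prev + rest_nonneg

end Ordered

end TransferRule

section MvPolynomialBounds

open MvPolynomial

variable {σ : Type*}

theorem totalDegree_aeval_le {R : Type*} [CommSemiring R] (P : Polynomial R)
    (l : MvPolynomial σ R) :
    (Polynomial.aeval l P).totalDegree ≤ P.natDegree * l.totalDegree := by
  rw [Polynomial.aeval_eq_sum_range]
  refine totalDegree_finsetSum_le fun i hi => ?_
  calc (P.coeff i • l ^ i).totalDegree
      ≤ (l ^ i).totalDegree := totalDegree_smul_le _ _
    _ ≤ i * l.totalDegree := totalDegree_pow l i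
    _ ≤ P.natDegree * l.totalDegree := by
        gcongr
        exact Finset.mem_range_succ_iff.1 hi

theorem exists_totalDegree_le_eval_eq_choose {ι K : Type*} [Field K] [CharZero K]
    {x : ι → σ → K} {N : ι → ℕ} {l : MvPolynomial σ K} (hl : l.totalDegree ≤ 1)
    (hN : ∀ i, (N i : K) = eval (x i) l) (j : ℕ) :
    ∃ Q : MvPolynomial σ K, Q.totalDegree ≤ j ∧ ∀ i, ((N i).choose j : K) = eval (x i) Q := by
  let P : Polynomial K := Polynomial.C (j.factorial : K)⁻¹ * descPochhammer K j
  refine ⟨Polynomial.aeval l P, ?_, fun i => ?_⟩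
  · calc (Polynomial.aeval l P).totalDegree
        ≤ P.natDegree * l.totalDegree := totalDegree_aeval_le P l
      _ ≤ j * 1 := by
        gcongr
        exact (Polynomial.natDegree_C_mul_le _ _).trans (descPochhammer_natDegree K j).le
      _ = j := mul_one j
  · have eval_aeval : eval (x i) (Polynomial.aeval l P) = P.eval (eval (x i) l) := by
      rw [← coe_aeval_eq_eval, RingHom.coe_coe, ← Polynomial.aeval_algHom_apply,
        Polynomial.coe_aeval_eq_eval]
    rw [eval_aeval, ← hN, Polynomial.eval_mul, Polynomial.eval_C,
      Nat.cast_choose_eq_descPochhammer_div, div_eq_inv_mul]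

variable {K : Type*} [Field K] [LinearOrder K] [IsStrictOrderedRing K]

theorem abs_eval_le_sum_abs_coeff_mul_pow (Q : MvPolynomial σ K) {x : σ → K} {L : K}
    (hL : 1 ≤ L) (hx : ∀ i, |x i| ≤ L) :
    |eval x Q| ≤ (∑ m ∈ Q.support, |Q.coeff m|) * L ^ Q.totalDegree := by
  rw [eval_eq, Finset.sum_mul]
  refine (Finset.abs_sum_le_sum_abs _ _).trans (Finset.sum_le_sum fun m hm => ?_)
  rw [abs_mul, Finset.abs_prod]
  gcongr
  calc ∏ i ∈ m.support, |x i ^ m i|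
      ≤ ∏ i ∈ m.support, L ^ m i := by
        gcongr with i
        rw [abs_pow]
        gcongr
        exact hx i
    _ = L ^ ∑ i ∈ m.support, m i := Finset.prod_pow_eq_pow_sum _ _ _
    _ ≤ L ^ Q.totalDegree := pow_le_pow_right₀ hL (le_totalDegree hm)

theorem le_totalDegree_of_pow_le_eval [Archimedean K] (Q : MvPolynomial σ K) {x : ℕ → σ → K}
    {r c : K} {k : ℕ} (hr : 1 ≤ r) (hc : 0 < c) (hx : ∀ N i, |x N i| ≤ r * (N + 1))
    (h : ∀ N : ℕ, c * ((N : K) + 1) ^ k ≤ eval (x N) Q) : k ≤ Q.totalDegree := by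
  by_contra! hlt
  set D := (∑ m ∈ Q.support, |Q.coeff m|) * r ^ Q.totalDegree
  obtain ⟨N, hN⟩ := exists_nat_gt (D / c)
  have one_le : (1 : K) ≤ N + 1 := by simp
  have upper : c * ((N : K) + 1) ^ k ≤ D * ((N : K) + 1) ^ Q.totalDegree :=
    calc c * ((N : K) + 1) ^ k ≤ |eval (x N) Q| := (h N).trans (le_abs_self _)
      _ ≤ _ := abs_eval_le_sum_abs_coeff_mul_pow Q (one_le_mul_of_one_le_of_one_le hr one_le) (hx N)
      _ = D * ((N : K) + 1) ^ Q.totalDegree := by rw [mul_pow, mul_assoc]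
  have lower : c * ((N : K) + 1) * ((N : K) + 1) ^ Q.totalDegree ≤ c * ((N : K) + 1) ^ k := by
    rw [mul_assoc, ← pow_succ']
    exact mul_le_mul_of_nonneg_left (pow_le_pow_right₀ one_le hlt) hc.le
  have : c * ((N : K) + 1) ≤ D := le_of_mul_le_mul_right (lower.trans upper) (by positivity)
  rw [div_lt_iff₀' hc] at hN
  linarith

end MvPolynomialBounds

section PolynomialCoeffs

open PowerSeries

/-- A family of power series `F i` has polynomial coefficients in the data `x i` if, for every `k`,
the coefficient of `X ^ k` in `F i` is the value at `x i` of one polynomial, independent of `i`, of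
total degree at most `k`. -/
def HasPolynomialCoeffs {ι σ R : Type*} [CommSemiring R] (x : ι → σ → R) (F : ι → R⟦X⟧) : Prop :=
  ∀ k, ∃ Q : MvPolynomial σ R, Q.totalDegree ≤ k ∧ ∀ i, coeff k (F i) = MvPolynomial.eval (x i) Q

theorem coeff_pow_eq_sum_choose_mul_coeff {R : Type*} [CommRing R] {r : R⟦X⟧}
    (hr : constantCoeff r = 1) (N k : ℕ) :
    coeff k (r ^ N) = ∑ j ∈ Finset.range (k + 1), (N.choose j : R) * coeff k ((r - 1) ^ j) := by
  have coeff_eq_zero (j : ℕ) (hj : k < j) : coeff k ((r - 1) ^ j) = 0 :=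
    coeff_of_lt_order _ <| (Nat.cast_lt.2 hj).trans_le <|
      le_order_pow_of_constantCoeff_eq_zero j (by simp [hr])
  have expand : coeff k (r ^ N) =
      ∑ j ∈ Finset.range (N + 1), (N.choose j : R) * coeff k ((r - 1) ^ j) := by
    conv_lhs => rw [← sub_add_cancel r 1, add_pow, map_sum]
    refine Finset.sum_congr rfl fun j _ => ?_
    rw [one_pow, mul_one, mul_comm, ← map_natCast (C (R := R)), coeff_C_mul]
  rw [expand,
    ← Finset.eventually_constant_sum (n := N + k + 1) (N := N + 1)
      (fun j hj => by rw [Nat.choose_eq_zero_of_lt hj, Nat.cast_zero, zero_mul]) (by omega),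
    ← Finset.eventually_constant_sum (n := N + k + 1) (N := k + 1)
      (fun j hj => by rw [coeff_eq_zero j hj, mul_zero]) (by omega)]

variable {ι σ : Type*}

namespace HasPolynomialCoeffs

theorem const_one {R : Type*} [CommSemiring R] (x : ι → σ → R) :
    HasPolynomialCoeffs x fun _ => 1 := fun k =>
  ⟨MvPolynomial.C (coeff k 1), (MvPolynomial.totalDegree_C _).trans_le k.zero_le, by simp⟩

theorem mul {R : Type*} [CommSemiring R] {x : ι → σ → R} {F G : ι → R⟦X⟧}
    (hF : HasPolynomialCoeffs x F) (hG : HasPolynomialCoeffs x G) :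
    HasPolynomialCoeffs x fun i => F i * G i := by
  choose P P_degree P_eval using hF
  choose Q Q_degree Q_eval using hG
  refine fun k => ⟨∑ ij ∈ Finset.HasAntidiagonal.antidiagonal k, P ij.1 * Q ij.2, ?_, fun i => ?_⟩
  · refine MvPolynomial.totalDegree_finsetSum_le fun ij hij => ?_
    rw [← Finset.HasAntidiagonal.mem_antidiagonal.1 hij]
    exact (MvPolynomial.totalDegree_mul _ _).trans (add_le_add (P_degree _) (Q_degree _))
  · simp only [coeff_mul, map_sum, map_mul, P_eval, Q_eval]

theorem prod {κ R : Type*} [CommSemiring R] {x : ι → σ → R} {s : Finset κ} {F : κ → ι → R⟦X⟧}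
    (hF : ∀ j ∈ s, HasPolynomialCoeffs x (F j)) :
    HasPolynomialCoeffs x fun i => ∏ j ∈ s, F j i := by
  classical
  induction s using Finset.induction_on with
  | empty => simpa using const_one x
  | insert j s hj ih =>
    simp only [Finset.prod_insert hj]
    exact (hF j (by simp)).mul (ih fun i hi => hF i (by simp [hi]))

theorem pow_of_linear {K : Type*} [Field K] [CharZero K] {x : ι → σ → K} {N : ι → ℕ}
    {l : MvPolynomial σ K} (hl : l.totalDegree ≤ 1)
    (hN : ∀ i, (N i : K) = MvPolynomial.eval (x i) l) {r : K⟦X⟧} (hr : constantCoeff r = 1) :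
    HasPolynomialCoeffs x fun i => r ^ N i := by
  choose binom binom_degree binom_eval using exists_totalDegree_le_eval_eq_choose hl hN
  refine fun k => ⟨∑ j ∈ Finset.range (k + 1), MvPolynomial.C (coeff k ((r - 1) ^ j)) * binom j,
    MvPolynomial.totalDegree_finsetSum_le fun j hj => ?_, fun i => ?_⟩
  · rw [← MvPolynomial.smul_eq_C_mul]
    exact (MvPolynomial.totalDegree_smul_le _ _).trans <|
      (binom_degree j).trans (Finset.mem_range_succ_iff.1 hj)
  · simp only [coeff_pow_eq_sum_choose_mul_coeff hr, map_sum, map_mul, MvPolynomial.eval_C,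
      ← binom_eval, mul_comm]

end HasPolynomialCoeffs

end PolynomialCoeffs

section Borrows

/-- The number of borrows in the `L` lowest positions when `m` is subtracted from `n` in base `b`;
a borrow out of the highest position (when `n < m < b ^ L`) counts as well. -/
def borrowsBelow (b L n m : ℕ) : ℕ :=
  ((Finset.range L).filter fun i => n % b ^ (i + 1) < m % b ^ (i + 1)).card

/-- The sum of `t ^ borrows` over all `m < b ^ L`, weighted by `y` or `z` according to whether the
subtraction of `m` from `n` ends without or with a borrow out of the highest position. -/
def borrowSum {R : Type*} [CommSemiring R] (b L n : ℕ) (t y z : R) : R :=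
  ∑ m ∈ Finset.range (b ^ L), t ^ borrowsBelow b L n m * if n < m then z else y

theorem mul_add_lt_mul_add_iff {q d e n m : ℕ} (hn : n < q) (hm : m < q) :
    d * q + n < e * q + m ↔ (if n < m then d else d + 1) ≤ e := by
  rcases lt_trichotomy d e with h | rfl | h
  · have := Nat.mul_le_mul_right q h
    split_ifs <;> simp only [Nat.succ_mul] at * <;> omega
  · split_ifs <;> omega
  · have := Nat.mul_le_mul_right q h
    split_ifs <;> simp only [Nat.succ_mul] at * <;> omega

theorem mul_pow_add_mod_pow_of_le {b d n i L : ℕ} (hi : i ≤ L) :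
    (d * b ^ L + n) % b ^ i = n % b ^ i := by
  obtain ⟨c, hc⟩ := (pow_dvd_pow b hi).mul_left d
  rw [hc, Nat.mul_add_mod]

theorem mul_pow_add_lt_pow_succ {b d n L : ℕ} (hd : d < b) (hn : n < b ^ L) :
    d * b ^ L + n < b ^ (L + 1) := by
  rw [pow_succ']
  nlinarith

theorem borrowsBelow_succ {b L d e n m : ℕ} (hd : d < b) (he : e < b) (hn : n < b ^ L)
    (hm : m < b ^ L) :
    borrowsBelow b (L + 1) (d * b ^ L + n) (e * b ^ L + m) =
      borrowsBelow b L n m + if d * b ^ L + n < e * b ^ L + m then 1 else 0 := by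
  simp only [borrowsBelow, Finset.card_filter]
  rw [Finset.sum_range_succ, Nat.mod_eq_of_lt (mul_pow_add_lt_pow_succ hd hn),
    Nat.mod_eq_of_lt (mul_pow_add_lt_pow_succ he hm)]
  congr 1
  refine Finset.sum_congr rfl fun i hi => ?_
  have hi : i + 1 ≤ L := Finset.mem_range.1 hi
  rw [mul_pow_add_mod_pow_of_le hi, mul_pow_add_mod_pow_of_le hi]

theorem sum_range_mul_eq_sum_sum {M : Type*} [AddCommMonoid M] (c q : ℕ) (f : ℕ → M) :
    ∑ m ∈ Finset.range (c * q), f m =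
      ∑ e ∈ Finset.range c, ∑ m ∈ Finset.range q, f (e * q + m) := by
  induction c with
  | zero => simp
  | succ c ih => rw [Nat.succ_mul, Finset.sum_range_add, ih, Finset.sum_range_succ]

theorem sum_range_ite_le {R : Type*} [CommSemiring R] {b c : ℕ} (hc : c ≤ b) (y z : R) :
    ∑ e ∈ Finset.range b, (if c ≤ e then z else y) = c * y + (b - c : ℕ) * z := by
  obtain ⟨k, rfl⟩ := Nat.exists_eq_add_of_le hc
  rw [Finset.sum_range_add, Finset.sum_congr rfl fun e he => if_neg (Finset.mem_range.1 he).not_ge]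
  simp

-- Summing over the new leading digit `e` of `m` acts on the weights `(y, z)` by the transpose of
-- the transfer matrix of `d`.
theorem borrowSum_succ {R : Type*} [CommSemiring R] {b L d n : ℕ} (hd : d < b) (hn : n < b ^ L)
    (t y z : R) :
    borrowSum b (L + 1) (d * b ^ L + n) t y z =
      borrowSum b L n t ((d + 1) * y + (b - 1 - d : ℕ) * (t * z))
        (d * y + (b - d : ℕ) * (t * z)) := by
  have sum_leading_digit (m : ℕ) (hm : m < b ^ L) :
      ∑ e ∈ Finset.range b, (if d * b ^ L + n < e * b ^ L + m then t * z else y) =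
        if n < m then d * y + (b - d : ℕ) * (t * z)
        else (d + 1) * y + (b - 1 - d : ℕ) * (t * z) := by
    simp only [mul_add_lt_mul_add_iff hn hm]
    split_ifs
    · rw [sum_range_ite_le hd.le]
    · rw [sum_range_ite_le hd, Nat.cast_succ, Nat.sub_sub, add_comm 1 d]
  unfold borrowSum
  rw [pow_succ', sum_range_mul_eq_sum_sum, Finset.sum_comm]
  refine Finset.sum_congr rfl fun m hm => ?_
  have hm : m < b ^ L := Finset.mem_range.1 hm
  rw [← sum_leading_digit m hm, Finset.mul_sum]
  refine Finset.sum_congr rfl fun e he => ?_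
  rw [borrowsBelow_succ hd (Finset.mem_range.1 he) hn hm]
  split_ifs <;> ring

end Borrows

section DigitWords

open PowerSeries

theorem lt_of_mem_wordOf {b n d : ℕ} (hb : 1 < b) (hd : d ∈ wordOf b n) : d < b :=
  Nat.digits_lt_base hb (List.mem_reverse.1 hd)

theorem ofDigits_reverse_wordOf (b n : ℕ) : Nat.ofDigits b (wordOf b n).reverse = n := by
  rw [wordOf, List.reverse_reverse, Nat.ofDigits_digits]

theorem exists_wordOf_eq {b : ℕ} (hb : 1 < b) {W : List ℕ} (hW : ∀ d ∈ W, d < b)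
    (hhead : ∀ h : W ≠ [], W.head h ≠ 0) : ∃ n, wordOf b n = W := by
  refine ⟨Nat.ofDigits b W.reverse, ?_⟩
  rw [wordOf, Nat.digits_ofDigits b hb _ (fun d hd => hW d (List.mem_reverse.1 hd))
    (by simpa using hhead), List.reverse_reverse]

/-- The automaton of subtraction in base `b`, reading the digits `d` of the minuend and summing over
the digits of the subtrahend; its second state means that a borrow is pending. The weights are
divided by `d + 1`, and the natural subtractions are exact on digits `d < b`. -/
def borrowRule (b : ℕ) : TransferRule ℕ ℚ where
  a d := d / (d + 1)
  b d := (b - 1 - d : ℕ) / (d + 1)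
  c d := (b - d : ℕ) / (d + 1)

theorem borrowSum_ofDigits_reverse {b : ℕ} (hb : 1 < b) {W : List ℕ} (hW : ∀ d ∈ W, d < b)
    (y z : ℚ⟦X⟧) :
    borrowSum b W.length (Nat.ofDigits b W.reverse) X y z =
      C (W.map fun d : ℕ => (d : ℚ) + 1).prod *
        (((borrowRule b).pair W).1 * y + ((borrowRule b).pair W).2 * z) := by
  induction W generalizing y z with
  | nil => simp [borrowSum, borrowsBelow, TransferRule.pair]
  | cons d W ih =>
    have hW' : ∀ e ∈ W, e < b := fun e he => hW e (by simp [he])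
    have value_lt : Nat.ofDigits b W.reverse < b ^ W.length := by
      simpa using Nat.ofDigits_lt_base_pow_length hb (l := W.reverse) (by simpa using hW')
    have clear_denom (s : ℕ) : (s : ℚ⟦X⟧) = (d + 1) * C ((s : ℚ) / (d + 1)) := by
      have : (d : ℚ⟦X⟧) + 1 = C ((d : ℚ) + 1) := by simp
      rw [this, ← map_mul, mul_div_cancel₀ _ (by positivity), map_natCast]
    have ha : (d : ℚ⟦X⟧) = (d + 1) * C ((borrowRule b).a d) := clear_denom d
    have hb : ((b - 1 - d : ℕ) : ℚ⟦X⟧) = (d + 1) * C ((borrowRule b).b d) := clear_denom _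
    have hc : ((b - d : ℕ) : ℚ⟦X⟧) = (d + 1) * C ((borrowRule b).c d) := clear_denom _
    rw [Nat.ofDigits_reverse_cons, add_comm, mul_comm (b ^ _), List.length_cons,
      borrowSum_succ (hW d (by simp)) value_lt, ih hW']
    simp only [TransferRule.pair, List.map_cons, List.prod_cons, map_mul, map_add, map_natCast,
      map_one]
    linear_combination (C (W.map fun d : ℕ => (d : ℚ) + 1).prod) *
      (((borrowRule b).pair W).1 * X * z * hb +
        ((borrowRule b).pair W).2 * (y * ha + X * z * hc))

theorem mod_lt_mod_iff_le_mod_add_mod {q n m : ℕ} (hq : 0 < q) (hm : m ≤ n) :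
    n % q < m % q ↔ q ≤ m % q + (n - m) % q := by
  obtain ⟨k, rfl⟩ := Nat.exists_eq_add_of_le hm
  rw [Nat.add_sub_cancel_left]
  have := Nat.mod_lt k hq
  by_cases h : q ≤ m % q + k % q
  · have := Nat.add_mod_add_of_le_add_mod h
    omega
  · have := Nat.add_mod_of_add_mod_lt (not_le.1 h)
    omega

theorem padicValNat_choose_eq_borrowsBelow {p L n m : ℕ} (hp : p.Prime) (hn : n < p ^ L)
    (hm : m ≤ n) : padicValNat p (n.choose m) = borrowsBelow p L n m := by
  have := Fact.mk hp
  have hlog : Nat.log p n < L + 1 :=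
    Nat.lt_succ_of_le ((Nat.log_mono_right hn.le).trans_eq (Nat.log_pow hp.one_lt L))
  rw [padicValNat_choose hm hlog, borrowsBelow, Finset.card_filter, Finset.card_filter,
    Finset.sum_Ico_eq_sum_range]
  simp only [mod_lt_mod_iff_le_mod_add_mod (pow_pos hp.pos _) hm, add_comm 1, Nat.add_sub_cancel]

theorem rowCount_prime_pow_eq_sum_coeff_borrowSum {p L n : ℕ} (hp : p.Prime) (hn : n < p ^ L)
    (α : ℕ) :
    (rowCount (p ^ α) n : ℚ) = ∑ β ∈ Finset.range α, coeff β (borrowSum p L n X 1 0 : ℚ⟦X⟧) := by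
  have := Fact.mk hp
  have not_dvd_iff (m : ℕ) (hm : m ≤ n) : ¬ p ^ α ∣ n.choose m ↔ borrowsBelow p L n m < α := by
    rw [padicValNat_dvd_iff_le (Nat.choose_ne_zero hm), not_le,
      padicValNat_choose_eq_borrowsBelow hp hn hm]
  simp only [borrowSum, map_sum]
  rw [Finset.sum_comm, rowCount, Finset.card_filter, Nat.cast_sum]
  refine Finset.sum_subset_zero_on_sdiff (Finset.range_subset_range.2 hn) (fun m hm => ?_)
    fun m hm => ?_
  · have : n < m := by simpa using (Finset.mem_sdiff.1 hm).2
    simp [this]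
  · have hm : m ≤ n := Finset.mem_range_succ_iff.1 hm
    simp [not_dvd_iff m hm, hm.not_gt, coeff_X_pow]

theorem rowCount_prime_pow_eq_mul_sum_coeff_pair {p : ℕ} (hp : p.Prime) (n α : ℕ) :
    (rowCount (p ^ α) n : ℚ) =
      rowCount p n * ∑ β ∈ Finset.range α, coeff β ((borrowRule p).pair (wordOf p n)).1 := by
  set D : ℚ := ((wordOf p n).map fun d : ℕ => (d : ℚ) + 1).prod
  have n_lt : n < p ^ (wordOf p n).length := by
    simpa [wordOf] using Nat.lt_base_pow_length_digits hp.one_lt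
  have value : borrowSum p (wordOf p n).length n X 1 0 =
      C D * ((borrowRule p).pair (wordOf p n)).1 := by
    have := borrowSum_ofDigits_reverse hp.one_lt (fun d => lt_of_mem_wordOf hp.one_lt) 1 0
      (W := wordOf p n)
    rwa [ofDigits_reverse_wordOf, mul_one, mul_zero, add_zero] at this
  have rowCount_eq (α : ℕ) : (rowCount (p ^ α) n : ℚ) =
      D * ∑ β ∈ Finset.range α, coeff β ((borrowRule p).pair (wordOf p n)).1 := by
    simp only [rowCount_prime_pow_eq_sum_coeff_borrowSum hp n_lt, value, coeff_C_mul,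
      Finset.mul_sum]
  have rowCount_prime : (rowCount p n : ℚ) = D := by
    simpa [TransferRule.constantCoeff_pair_fst] using rowCount_eq 1
  rw [rowCount_prime, rowCount_eq]

end DigitWords

section DegreeUpperBound

open PowerSeries

/-- The words indexing the variables: nonempty, of length at most `α`, over the digits below
`p`. -/
abbrev DigitWord (p α : ℕ) : Type := {w : List ℕ // w ≠ [] ∧ w.length ≤ α ∧ ∀ d ∈ w, d < p}

variable {K : Type*} [Field K]

theorem finite_setOf_length_le_and_forall_lt (p α : ℕ) :
    {w : List ℕ | w.length ≤ α ∧ ∀ d ∈ w, d < p}.Finite := by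
  refine ((List.finite_length_le (Fin p) α).image (List.map Fin.val)).subset ?_
  rintro w ⟨hlen, hlt⟩
  exact ⟨w.pmap Fin.mk hlt, by simpa using hlen, by simp [List.map_pmap]⟩

-- Shorter than `k + 1`, a window `w` is a suffix of `W`: an occurrence that no letter extends.
theorem exists_linear_eval_eq_countP_take {p k : ℕ} (w : DigitWord p (k + 1)) :
    ∃ l : MvPolynomial (DigitWord p (k + 1)) K, l.totalDegree ≤ 1 ∧
      ∀ W : List ℕ, (∀ d ∈ W, d < p) →
        (W.tails.countP (List.take (k + 1) · = w.1) : K) =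
          MvPolynomial.eval (fun v => (W.tails.countP (v.1 <+: ·) : K)) l := by
  obtain ⟨w, hne, hlen, hlt⟩ := w
  rcases hlen.eq_or_lt with hlen | hlen
  · refine ⟨MvPolynomial.X ⟨w, hne, hlen.le, hlt⟩, (MvPolynomial.totalDegree_X _).le,
      fun W _ => ?_⟩
    simp only [MvPolynomial.eval_X, List.prefix_iff_eq_take, hlen, eq_comm (b := w)]
  · let snoc (d : Fin p) : DigitWord p (k + 1) :=
      ⟨w ++ [d.1], by simp, by simpa using hlen, fun e he => by
        rcases List.mem_append.1 he with he | he
        · exact hlt e he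
        · rw [List.mem_singleton.1 he]
          exact d.2⟩
    refine ⟨MvPolynomial.X ⟨w, hne, hlen.le, hlt⟩ - ∑ d, MvPolynomial.X (snoc d), ?_,
      fun W hW => ?_⟩
    · exact (MvPolynomial.totalDegree_sub _ _).trans <| max_le (MvPolynomial.totalDegree_X _).le <|
        MvPolynomial.totalDegree_finsetSum_le fun d _ => (MvPolynomial.totalDegree_X _).le
    · have count := countP_prefix_eq_add_sum_snoc (Finset.range p) hlen W.tails fun T hT d hd =>
        Finset.mem_range.2 (hW d (((List.mem_tails T W).1 hT).mem hd))
      rw [Finset.sum_range] at count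
      simp [snoc, count]

theorem TransferRule.exists_eval_eq_coeff_pair_fst [CharZero K] (M : TransferRule ℕ K) (p : ℕ)
    {k β : ℕ} (hβ : β ≤ k) :
    ∃ Q : MvPolynomial (DigitWord p (k + 1)) K, Q.totalDegree ≤ β ∧
      ∀ W : List ℕ, (∀ d ∈ W, d < p) →
        coeff β (M.pair W).1 = MvPolynomial.eval (fun w => (W.tails.countP (w.1 <+: ·) : K)) Q := by
  set T := (finite_setOf_length_le_and_forall_lt p (k + 1)).toFinset
  have mem_T (w : List ℕ) : w ∈ T ↔ w.length ≤ k + 1 ∧ ∀ d ∈ w, d < p := by simp [T]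
  have polynomial_coeffs : HasPolynomialCoeffs
      (fun (W : {W : List ℕ // ∀ d ∈ W, d < p}) (w : DigitWord p (k + 1)) =>
        (W.1.tails.countP (w.1 <+: ·) : K))
      fun W => ∏ w ∈ T, M.ratio w ^ W.1.tails.countP (List.take (k + 1) · = w) := by
    refine HasPolynomialCoeffs.prod fun w hw => ?_
    rcases eq_or_ne w [] with rfl | hne
    · simpa only [ratio_nil, one_pow] using HasPolynomialCoeffs.const_one _
    · obtain ⟨l, l_degree, l_eval⟩ :=
        exists_linear_eval_eq_countP_take (K := K) ⟨w, hne, (mem_T w).1 hw⟩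
      exact HasPolynomialCoeffs.pow_of_linear l_degree
        (fun W : {W : List ℕ // ∀ d ∈ W, d < p} => l_eval W.1 W.2) (M.constantCoeff_ratio w)
  obtain ⟨Q, Q_degree, Q_eval⟩ := polynomial_coeffs β
  refine ⟨Q, Q_degree, fun W hW => ?_⟩
  rw [← Q_eval ⟨W, hW⟩]
  refine M.coeff_pair_fst_eq_coeff_prod_ratio_pow hβ fun U hU =>
    (mem_T _).2 ⟨by simp, fun d hd => ?_⟩
  exact hW d (((List.mem_tails U W).1 hU).mem (List.mem_of_mem_take hd))

theorem exists_totalDegree_le_rowCount_eq {p : ℕ} (hp : p.Prime) (k : ℕ) :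
    ∃ Q : MvPolynomial (DigitWord p (k + 1)) ℚ, Q.totalDegree ≤ k ∧
      ∀ n : ℕ, (rowCount (p ^ (k + 1)) n : ℚ) =
        rowCount p n * MvPolynomial.eval (fun w => (subwordCount p n w.1 : ℚ)) Q := by
  choose! Q Q_degree Q_eval using fun β (hβ : β ≤ k) =>
    (borrowRule p).exists_eval_eq_coeff_pair_fst p hβ
  refine ⟨∑ β ∈ Finset.range (k + 1), Q β,
    MvPolynomial.totalDegree_finsetSum_le fun β hβ => ?_, fun n => ?_⟩
  · rw [Finset.mem_range_succ_iff] at hβ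
    exact (Q_degree β hβ).trans hβ
  · rw [rowCount_prime_pow_eq_mul_sum_coeff_pair hp, map_sum]
    simp only [subwordCount_eq_countP_tails]
    congr 1
    exact Finset.sum_congr rfl fun β hβ =>
      Q_eval β (Finset.mem_range_succ_iff.1 hβ) _ fun d => lt_of_mem_wordOf hp.one_lt

end DegreeUpperBound

section DegreeLowerBound

open PowerSeries

theorem subwordCount_le_length_wordOf_succ (b n : ℕ) (w : List ℕ) :
    subwordCount b n w ≤ (wordOf b n).length + 1 := by
  rw [subwordCount_eq_countP_tails, ← List.length_tails]
  exact List.countP_le_length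

theorem rowCount_pos {k : ℕ} (hk : k ≠ 1) (n : ℕ) : 0 < rowCount k n :=
  Finset.card_pos.2 ⟨0, by simpa using hk⟩

theorem exists_wordOf_eq_flatten_replicate {b : ℕ} (hb : 1 < b) (N : ℕ) :
    ∃ n, wordOf b n = (List.replicate N [1, 0]).flatten := by
  refine exists_wordOf_eq hb (fun d hd => ?_) fun h => ?_
  · have : N ≠ 0 ∧ (d = 1 ∨ d = 0) := by simpa using hd
    omega
  · cases N with
    | zero => simp at h
    | succ N => simp [List.replicate_succ]

theorem pow_div_factorial_le_sum_coeff_pair (b N k : ℕ) :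
    (((b - 1 : ℕ) : ℚ) / 2) ^ k / k.factorial * ((N : ℚ) + 1) ^ k ≤
      ∑ β ∈ Finset.range (k + 1),
        coeff β ((borrowRule b).pair (List.replicate (N + k) [1, 0]).flatten).1 := by
  have a_nonneg : 0 ≤ (borrowRule b).a := fun d => by simp only [borrowRule]; positivity
  have b_nonneg : 0 ≤ (borrowRule b).b := fun d => by simp only [borrowRule]; positivity
  have c_nonneg : 0 ≤ (borrowRule b).c := fun d => by simp only [borrowRule]; positivity
  have weight : (borrowRule b).a 1 * (borrowRule b).b 0 = ((b - 1 : ℕ) : ℚ) / 2 := by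
    simp only [borrowRule, Nat.cast_one, Nat.cast_zero, Nat.sub_zero]
    ring
  have choose_ge : ((N : ℚ) + 1) ^ k / k.factorial ≤ (N + k).choose k := by
    simpa [Nat.add_right_comm N k 1] using Nat.pow_le_choose (α := ℚ) k (N + k)
  calc (((b - 1 : ℕ) : ℚ) / 2) ^ k / k.factorial * ((N : ℚ) + 1) ^ k
      = (((b - 1 : ℕ) : ℚ) / 2) ^ k * (((N : ℚ) + 1) ^ k / k.factorial) := by ring
    _ ≤ (((b - 1 : ℕ) : ℚ) / 2) ^ k * (N + k).choose k := by gcongr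
    _ ≤ coeff k ((borrowRule b).pair (List.replicate (N + k) [1, 0]).flatten).1 := by
      rw [← weight]
      exact TransferRule.pow_mul_choose_le_coeff_pair_flatten_replicate a_nonneg b_nonneg c_nonneg
        1 0 (N + k) k
    _ ≤ _ := Finset.single_le_sum
      (f := fun β => coeff β ((borrowRule b).pair (List.replicate (N + k) [1, 0]).flatten).1)
      (fun β _ => (TransferRule.coeff_pair_nonneg a_nonneg b_nonneg c_nonneg _ β).1)
      (Finset.self_mem_range_succ k)

theorem le_totalDegree_of_rowCount_eq {p k : ℕ} (hp : p.Prime) {σ : Type*} (word : σ → List ℕ)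
    {Q : MvPolynomial σ ℚ}
    (hQ : ∀ n : ℕ, (rowCount (p ^ (k + 1)) n : ℚ) =
      rowCount p n * MvPolynomial.eval (fun i => (subwordCount p n (word i) : ℚ)) Q) :
    k ≤ Q.totalDegree := by
  choose n wordOf_n using fun N => exists_wordOf_eq_flatten_replicate hp.one_lt (N + k)
  have eval_eq (N : ℕ) : MvPolynomial.eval (fun i => (subwordCount p (n N) (word i) : ℚ)) Q =
      ∑ β ∈ Finset.range (k + 1),
        coeff β ((borrowRule p).pair (List.replicate (N + k) [1, 0]).flatten).1 := by
    have rowCount_ne_zero : (rowCount p (n N) : ℚ) ≠ 0 :=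
      Nat.cast_ne_zero.2 (rowCount_pos hp.ne_one _).ne'
    rw [← wordOf_n, ← mul_right_inj' rowCount_ne_zero, ← hQ,
      rowCount_prime_pow_eq_mul_sum_coeff_pair hp]
  have count_le (N : ℕ) (i : σ) :
      |(subwordCount p (n N) (word i) : ℚ)| ≤ (2 * k + 2) * ((N : ℚ) + 1) := by
    have : subwordCount p (n N) (word i) ≤ (N + k) * 2 + 1 := by
      simpa [wordOf_n] using subwordCount_le_length_wordOf_succ p (n N) (word i)
    rw [Nat.abs_cast]
    norm_cast
    nlinarith
  have pred_pos : (0 : ℚ) < (p - 1 : ℕ) := Nat.cast_pos.2 (Nat.sub_pos_of_lt hp.one_lt)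
  exact le_totalDegree_of_pow_le_eval Q (by linarith [k.cast_nonneg (α := ℚ)])
    (c := ((p - 1 : ℕ) / 2) ^ k / k.factorial) (by positivity) count_le
    fun N => (pow_div_factorial_le_sum_coeff_pair p N k).trans_eq (eval_eq N).symm

end DegreeLowerBound

/-- **Theorem 2.** For a prime `p` and `α ≥ 1`, `a_{p^α}(n)/a_p(n)` is a polynomial of total
degree `α − 1` in the subword counts `|n|_w` for nonempty words `w` of length at most `α`
over the digit alphabet `{0, 1, …, p−1}`. -/
theorem stmt3 (p : ℕ) (hp : p.Prime) (α : ℕ) (hα : 1 ≤ α) :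
    ∃ Q : MvPolynomial {w : List ℕ // w ≠ [] ∧ w.length ≤ α ∧ ∀ d ∈ w, d < p} ℚ,
      Q.totalDegree = α - 1 ∧
      ∀ n : ℕ, (rowCount (p ^ α) n : ℚ) =
        (rowCount p n : ℚ) *
          MvPolynomial.eval (fun w => (subwordCount p n w.1 : ℚ)) Q := by
  obtain ⟨k, rfl⟩ := Nat.exists_eq_add_of_le' hα
  obtain ⟨Q, Q_degree, hQ⟩ := exists_totalDegree_le_rowCount_eq hp k
  exact ⟨Q, Q_degree.antisymm (le_totalDegree_of_rowCount_eq hp Subtype.val hQ), hQ⟩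
end

section
/- Let b ≥ 2 and let n ≥ 1 have standard base-b digits n_l n_{l−1} ⋯ n_0 (so the leading digit is n_l = ⌊n / b^l⌋ and n′ = n mod b^l is the number with digits n_{l−1} ⋯ n_0). Then for every β ≥ 0, A_n(β) = (n_l + 1) · A_{n′}(β) + n_l · B_{n′}(β), where B_{n′}(β) counts those m with n′ < m ≤ b^l − 1 such that exactly β of the indices 0 ≤ i ≤ l−1 satisfy m mod b^{i+1} > n′ mod b^{i+1}. -/
/-!
The number of borrows at positions below `l` depends only on `m` modulo `b ^ l`, and position `l`
never borrows when `m ≤ n`. So among `0 ≤ m ≤ n` one meets `n_l` full periods of length `b ^ l`,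
each contributing `A_{n'}(β) + B_{n'}(β)`, followed by the initial segment `0 ≤ m ≤ n'` of one more
period, contributing `A_{n'}(β)`.
-/

section Count

variable {p : ℕ → Prop} [DecidablePred p]

theorem count_mul_add_of_periodic {c : ℕ} (hp : Function.Periodic p c) (q r : ℕ) :
    Nat.count p (q * c + r) = q * Nat.count p c + Nat.count p r := by
  induction q with
  | zero => simp
  | succ q ih =>
    have hshift : (fun k => p (k + c)) = p := funext hp
    calc Nat.count p ((q + 1) * c + r)
        = Nat.count p (q * c + r + c) := by ring_nf
      _ = Nat.count p (q * c + r) + Nat.count p c := by simp only [Nat.count_add', hshift]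
      _ = (q + 1) * Nat.count p c + Nat.count p r := by rw [ih]; ring

theorem count_add_card_filter_Ico {k N : ℕ} (hkN : k ≤ N) :
    Nat.count p k + ((Finset.Ico k N).filter p).card = Nat.count p N := by
  simp only [Nat.count_eq_card_filter_range, Finset.card_filter]
  exact Finset.sum_range_add_sum_Ico _ hkN

end Count

theorem mod_le_mod_of_le_of_lt {k m n : ℕ} (hmn : m ≤ n) (hn : n < k) : m % k ≤ n % k := by
  rwa [Nat.mod_eq_of_lt hn, Nat.mod_eq_of_lt (hmn.trans_lt hn)]

/-- The number of borrows out of the `L` lowest positions when subtracting `m` from `n` in base `b`.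
In contrast to `borrowCount`, the number of positions inspected does not depend on `n`, so that `n`
and its residues modulo powers of `b` can be compared. -/
def borrowCountBelow (b L n m : ℕ) : ℕ :=
  ((Finset.range L).filter fun i => n % b ^ (i + 1) < m % b ^ (i + 1)).card

section Borrow

variable {b L n m : ℕ}

theorem borrowCountBelow_congr {n' m' : ℕ} (hn : n ≡ n' [MOD b ^ L]) (hm : m ≡ m' [MOD b ^ L]) :
    borrowCountBelow b L n m = borrowCountBelow b L n' m' := by
  refine congrArg Finset.card (Finset.filter_congr fun i hi => ?_)
  have hdvd : b ^ (i + 1) ∣ b ^ L := pow_dvd_pow b (Finset.mem_range.mp hi)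
  rw [hn.of_dvd hdvd, hm.of_dvd hdvd]

theorem borrowCountBelow_mod_left (b L n m : ℕ) :
    borrowCountBelow b L (n % b ^ L) m = borrowCountBelow b L n m :=
  borrowCountBelow_congr (Nat.mod_modEq n _) rfl

theorem periodic_borrowCountBelow (b L n : ℕ) :
    Function.Periodic (borrowCountBelow b L n) (b ^ L) :=
  fun m => borrowCountBelow_congr rfl (Nat.add_mod_right m _)

theorem borrowCount_eq_borrowCountBelow (hb : 1 < b) (hmn : m ≤ n) (hn : n < b ^ (L + 1)) :
    borrowCount b n m = borrowCountBelow b L n m := by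
  have hlen : (Nat.digits b n).length ≤ L + 1 := (Nat.digits_length_le_iff hb n).mpr hn
  refine congrArg Finset.card (Finset.ext fun i => ?_)
  simp only [Finset.mem_filter, Finset.mem_range, and_congr_left_iff]
  intro hborrow
  have hpow : b ^ (i + 1) ≤ n :=
    le_of_not_gt fun hlt => hborrow.not_ge (mod_le_mod_of_le_of_lt hmn hlt)
  have hi_lt_length : i + 1 < (Nat.digits b n).length := (Nat.lt_digits_length_iff hb n).mpr hpow
  omega

theorem borrowA_eq_count (hb : 1 < b) (hn : n < b ^ (L + 1)) (β : ℕ) :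
    borrowA b n β = Nat.count (fun m => borrowCountBelow b L n m = β) (n + 1) := by
  rw [Nat.count_eq_card_filter_range]
  refine congrArg Finset.card (Finset.filter_congr fun m hm => ?_)
  rw [borrowCount_eq_borrowCountBelow hb (Finset.mem_range_succ_iff.mp hm) hn]

theorem borrowA_add_borrowB (hb : 1 < b) (hn : n < b ^ L) (β : ℕ) :
    borrowA b n β + borrowB b L n β =
      Nat.count (fun m => borrowCountBelow b L n m = β) (b ^ L) := by
  have hIoc : Finset.Ioc n (b ^ L - 1) = Finset.Ico (n + 1) (b ^ L) := by
    rw [Finset.Ioc_sub_one_right_eq_Ioo, Finset.Ico_add_one_left_eq_Ioo]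
  have hB : borrowB b L n β =
      ((Finset.Ico (n + 1) (b ^ L)).filter fun m => borrowCountBelow b L n m = β).card := by
    rw [← hIoc]
    rfl
  rw [borrowA_eq_count hb (hn.trans (Nat.pow_lt_pow_succ hb)), hB, count_add_card_filter_Ico hn]

end Borrow

/-- For `b ≥ 2` and `n ≥ 1` with base-`b` digits `n_l ⋯ n_0` (leading digit `n_l = n / b^l`,
`n' = n mod b^l`), for every `β ≥ 0`:
`A_n(β) = (n_l + 1) · A_{n'}(β) + n_l · B_{n'}(β)`, where `B_{n'}(β)` counts those
`n' < m ≤ b^l − 1` with exactly `β` borrows among positions `0 ≤ i ≤ l−1`. -/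
theorem stmt5 (b : ℕ) (hb : 2 ≤ b) (n l : ℕ) (hn : 1 ≤ n)
    (hl : (Nat.digits b n).length = l + 1) (β : ℕ) :
    borrowA b n β =
      (n / b ^ l + 1) * borrowA b (n % b ^ l) β +
        (n / b ^ l) * borrowB b l (n % b ^ l) β := by
  have hn_lt : n < b ^ (l + 1) := hl ▸ Nat.lt_base_pow_length_digits hb
  have hmod_lt : n % b ^ l < b ^ l := Nat.mod_lt n (by positivity)
  set p : ℕ → Prop := fun m => borrowCountBelow b l (n % b ^ l) m = β with hp
  have hperiodic : Function.Periodic p (b ^ l) := (periodic_borrowCountBelow b l _).comp (· = β)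
  have hA : borrowA b n β = Nat.count p (n + 1) := by
    simp only [borrowA_eq_count hb hn_lt, hp, borrowCountBelow_mod_left]
  have hA' : borrowA b (n % b ^ l) β = Nat.count p (n % b ^ l + 1) :=
    borrowA_eq_count hb (hmod_lt.trans (Nat.pow_lt_pow_succ hb)) β
  calc borrowA b n β
      = Nat.count p (n / b ^ l * b ^ l + (n % b ^ l + 1)) := by
        rw [hA, ← add_assoc, Nat.div_add_mod']
    _ = n / b ^ l * Nat.count p (b ^ l) + Nat.count p (n % b ^ l + 1) :=
        count_mul_add_of_periodic hperiodic _ _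
    _ = n / b ^ l * (borrowA b (n % b ^ l) β + borrowB b l (n % b ^ l) β) +
          borrowA b (n % b ^ l) β := by
        rw [borrowA_add_borrowB hb hmod_lt, hA']
    _ = (n / b ^ l + 1) * borrowA b (n % b ^ l) β +
          n / b ^ l * borrowB b l (n % b ^ l) β := by ring
end
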